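/- arXiv:1710.04633 — 2 statements merged into one kernel-verified Lean document; each statement's English description precedes it below -/
import Mathlib

section
/- Let $1 \le k < r$ and let $\mathcal{H}$ be an $r$-uniform $k$-intersecting hypergraph on the vertex set $[n]$. Then the number of edges of $\mathcal{H}$ is at most $\max_{0 \le i \le (n-k)/2} |\mathcal{B}_i|$, where for each nonnegative integer $i$ with $0 \le i \le (n-k)/2$, $\mathcal{B}_i$ is the family of all $r$-element subsets $E$ of $[n]$ such that $|E \cap [k+2i]| \ge k+i$. -/
/-!
The proof follows Ahlswede and Khachatrian's pushing–pulling method. Shifting does not change the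
size of a family, so take a largest family `F` that is shifted, and assume `2r + 2 ≤ n + k`; when
`n` is smaller, the bound is trivial or is the Erdős–Ko–Rado theorem for the complements.

Let `p` be the first point beyond which `F` is symmetric, and consider the members of `F` that
contain `p` but in which `p` cannot be replaced by a larger element. Replacing `p` there in all
possible ways, and deleting the few sets of `F` that get in the way, gives another `k`-intersecting
family. Since `F` is largest, comparing sizes forces `p` to be the last element of `[k + 2q]` with
`q (n + 2k - 2r - 2) ≤ (r - k + 1) (k - 1)`. The complements form a largest `(n + k - 2r)`-
intersecting family of `(n - r)`-sets, to which the same argument applies in the reversed order, so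
`F` is also symmetric on a segment `[2r - k - 2q']`, where
`q' (n + 2k - 2r - 2) ≤ (r - k + 1) (n + k - 2r - 1)`. The two bounds add up to
`q + q' ≤ r - k + 1`, so if `0 < q`, then `F` is symmetric on `[k + 2(q - 1)]` and outside
`[k + 2q]`. These symmetries and the intersection property place `F` inside a Frankl family.
-/

namespace CompleteIntersection

open Finset

section Exchange

variable {α : Type*} [DecidableEq α] {x y v : α} {A B : Finset α}

/-- The set `A` with its element `x` replaced by `y`. It is meant for `x ∈ A` and `y ∉ A`, and
then has as many elements as `A`. -/
def exchange (x y : α) (A : Finset α) : Finset α := insert y (A.erase x)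

theorem mem_exchange : v ∈ exchange x y A ↔ v = y ∨ v ≠ x ∧ v ∈ A := by
  simp [exchange]

theorem card_exchange (hx : x ∈ A) (hy : y ∉ A) : #(exchange x y A) = #A := by
  rw [exchange, card_insert_of_notMem (by simp [hy]), card_erase_add_one hx]

theorem exchange_exchange (hx : x ∈ A) (hy : y ∉ A) :
    exchange y x (exchange x y A) = A := by
  ext v
  simp only [mem_exchange]
  grind

theorem exchange_injOn_compl (x : α) (A : Finset α) :
    Set.InjOn (fun y => exchange x y A) {y | y ∉ A} := by
  intro y hy z _ (h : exchange x y A = exchange x z A)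
  have hyz : y ∈ exchange x z A := h ▸ mem_exchange.2 (Or.inl rfl)
  exact (mem_exchange.1 hyz).resolve_right fun h' => hy h'.2

theorem compress_singleton (hx : x ∈ A) (hy : y ∉ A) :
    UV.compress {y} {x} A = exchange x y A := by
  rw [UV.compress_of_disjoint_of_le (by simpa using hy) (by simpa using hx)]
  ext v
  simp only [sup_eq_union, mem_sdiff, mem_union, mem_singleton, mem_exchange]
  grind

theorem mem_and_notMem_of_compress_singleton_ne (h : UV.compress {y} {x} A ≠ A) :
    x ∈ A ∧ y ∉ A := by
  contrapose! h
  refine if_neg fun ⟨hy, hx⟩ => ?_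
  exact disjoint_singleton_left.1 hy (h (singleton_subset_iff.1 hx))

end Exchange

section IntersectingFamily

variable {α : Type*} [DecidableEq α] {F : Finset (Finset α)} {S T A B : Finset α} {r k : ℕ}

/-- `F` is an `r`-uniform `k`-intersecting family. -/
structure IsIntersectingFamily (r k : ℕ) (F : Finset (Finset α)) : Prop where
  sized : (F : Set (Finset α)).Sized r
  le_card_inter : ∀ A ∈ F, ∀ B ∈ F, k ≤ #(A ∩ B)

/-- `F` is an `r`-uniform `k`-intersecting family of the largest possible size. -/
structure IsMaxIntersectingFamily (r k : ℕ) (F : Finset (Finset α)) : Prop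
    extends IsIntersectingFamily r k F where
  card_le : ∀ G : Finset (Finset α), IsIntersectingFamily r k G → #G ≤ #F

/-- The traces on `S` of any two members of `F` have at least `k` common elements. -/
def IsIntersectingOn (S : Finset α) (k : ℕ) (F : Finset (Finset α)) : Prop :=
  ∀ A ∈ F, ∀ B ∈ F, k ≤ #(A ∩ B ∩ S)

/-- `F` is symmetric on `S`: it is closed under replacing an element of `S` by another one. -/
def IsExchangeable (S : Finset α) (F : Finset (Finset α)) : Prop :=
  ∀ A ∈ F, ∀ x ∈ S, ∀ y ∈ S, x ∈ A → y ∉ A → exchange x y A ∈ F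

/-- `F` is left-compressed: it is closed under replacing an element by a smaller one. -/
def IsShifted [LT α] (F : Finset (Finset α)) : Prop :=
  ∀ A ∈ F, ∀ x y, y < x → x ∈ A → y ∉ A → exchange x y A ∈ F

theorem IsExchangeable.mono (hF : IsExchangeable T F) (hST : S ⊆ T) : IsExchangeable S F :=
  fun A hA x hx y hy => hF A hA x (hST hx) y (hST hy)

theorem card_inter_add_card_inter_of_subset_union (h : S ⊆ A ∪ B) :
    #(A ∩ S) + #(B ∩ S) = #S + #(A ∩ B ∩ S) := by
  rw [← card_union_add_card_inter, ← union_inter_distrib_right, inter_eq_right.2 h,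
    ← inter_inter_distrib_right]

theorem IsIntersectingFamily.exists_notMem_union [Fintype α] (hF : IsIntersectingFamily r k F)
    (hn : 2 * r < Fintype.card α + k) (hA : A ∈ F) (hB : B ∈ F) : ∃ j, j ∉ A ∪ B := by
  by_contra! hcover
  have hcard := card_union_add_card_inter A B
  rw [eq_univ_of_forall hcover, card_univ, hF.sized hA, hF.sized hB] at hcard
  have := hF.le_card_inter A hA B hB
  omega

-- An element of `A ∩ B` outside `S` can be exchanged in `A` for an element outside `A ∪ B`. This
-- shrinks `A ∩ B` without changing its trace on `S`.
theorem IsIntersectingFamily.isIntersectingOn [Fintype α] [LinearOrder α]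
    (hF : IsIntersectingFamily r k F) (hs : IsShifted F) (hS : IsLowerSet (S : Set α))
    (hex : IsExchangeable Sᶜ F) (hn : 2 * r < Fintype.card α + k) : IsIntersectingOn S k F := by
  intro A hA B hB
  induction h : #((A ∩ B) \ S) generalizing A with
  | zero =>
    have hcard := card_inter_add_card_sdiff (A ∩ B) S
    have := hF.le_card_inter A hA B hB
    omega
  | succ d ih =>
    obtain ⟨c, hc⟩ : ((A ∩ B) \ S).Nonempty := card_pos.1 (by omega)
    obtain ⟨j, hj⟩ := hF.exists_notMem_union hn hA hB
    simp only [mem_sdiff, mem_inter, mem_union, not_or] at hc hj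
    have hA' : exchange c j A ∈ F := by
      by_cases hjS : j ∈ S
      · exact hs A hA c j (lt_of_not_ge fun hcj => hc.2 (hS hcj hjS)) hc.1.1 hj.1
      · exact hex A hA c (mem_compl.2 hc.2) j (mem_compl.2 hjS) hc.1.1 hj.1
    have hsdiff : (exchange c j A ∩ B) \ S = ((A ∩ B) \ S).erase c := by
      ext v
      simp only [mem_sdiff, mem_inter, mem_exchange, mem_erase]
      grind
    have htrace : exchange c j A ∩ B ∩ S = A ∩ B ∩ S := by
      ext v
      simp only [mem_inter, mem_exchange]
      grind
    rw [← htrace]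
    refine ih _ hA' ?_
    rw [hsdiff, card_erase_of_mem (by simpa using hc), h, Nat.add_sub_cancel]

end IntersectingFamily

section Shifting

variable {α : Type*} [DecidableEq α] {F : Finset (Finset α)} {A B : Finset α} {x y : α} {r k : ℕ}

theorem card_exchange_inter_exchange (hxA : x ∈ A) (hyA : y ∉ A) (hxB : x ∈ B) :
    #(exchange x y A ∩ exchange x y B) = #(A ∩ B) := by
  rw [← card_exchange (mem_inter.2 ⟨hxA, hxB⟩) fun h => hyA (mem_inter.1 h).1]
  congr 1
  ext v
  simp only [mem_inter, mem_exchange]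
  grind

theorem IsIntersectingFamily.le_card_exchange_inter (hF : IsIntersectingFamily r k F)
    (hA : A ∈ F) (hB : B ∈ F) (hxA : x ∈ A) (hyA : y ∉ A)
    (hexB : x ∈ B → y ∉ B → exchange x y B ∈ F) : k ≤ #(exchange x y A ∩ B) := by
  by_cases hxB : x ∈ B
  · by_cases hyB : y ∈ B
    · calc k ≤ #(A ∩ B) := hF.le_card_inter A hA B hB
        _ = #(exchange x y (A ∩ B)) := (card_exchange (by simp [*]) (by simp [*])).symm
        _ ≤ #(exchange x y A ∩ B) := card_le_card fun v => by
          simp only [mem_inter, mem_exchange]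
          grind
    · refine (hF.le_card_inter A hA _ (hexB hxB hyB)).trans (card_le_card fun v => ?_)
      simp only [mem_inter, mem_exchange]
      grind
  · refine (hF.le_card_inter A hA B hB).trans (card_le_card fun v => ?_)
    simp only [mem_inter, mem_exchange]
    grind

theorem mem_compression_singleton_iff :
    A ∈ UV.compression {y} {x} F ↔
      (A ∈ F ∧ (x ∈ A → y ∉ A → exchange x y A ∈ F)) ∨
        ∃ B ∈ F, x ∈ B ∧ y ∉ B ∧ exchange x y B ∉ F ∧ exchange x y B = A := by
  rw [UV.mem_compression]
  constructor
  · rintro (⟨hA, hA'⟩ | ⟨hA, B, hB, rfl⟩)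
    · exact Or.inl ⟨hA, fun hx hy => compress_singleton hx hy ▸ hA'⟩
    · obtain ⟨hx, hy⟩ := mem_and_notMem_of_compress_singleton_ne fun h => hA (h ▸ hB)
      rw [compress_singleton hx hy] at hA ⊢
      exact Or.inr ⟨B, hB, hx, hy, hA, rfl⟩
  · rintro (⟨hA, hA'⟩ | ⟨B, hB, hx, hy, hA, rfl⟩)
    · refine Or.inl ⟨hA, ?_⟩
      by_cases h : UV.compress {y} {x} A = A
      · rwa [h]
      · obtain ⟨hx, hy⟩ := mem_and_notMem_of_compress_singleton_ne h
        exact compress_singleton hx hy ▸ hA' hx hy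
    · exact Or.inr ⟨hA, B, hB, compress_singleton hx hy⟩

theorem IsIntersectingFamily.compression (hF : IsIntersectingFamily r k F) (x y : α) :
    IsIntersectingFamily r k (UV.compression {y} {x} F) := by
  refine ⟨hF.sized.uvCompression rfl, fun A hA B hB => ?_⟩
  rw [mem_compression_singleton_iff] at hA hB
  obtain ⟨hA, hexA⟩ | ⟨A, hA, hxA, hyA, -, rfl⟩ := hA <;>
    obtain ⟨hB, hexB⟩ | ⟨B, hB, hxB, hyB, -, rfl⟩ := hB
  · exact hF.le_card_inter A hA B hB
  · exact inter_comm A _ ▸ hF.le_card_exchange_inter hB hA hxB hyB hexA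
  · exact hF.le_card_exchange_inter hA hB hxA hyA hexB
  · exact card_exchange_inter_exchange hxA hyA hxB ▸ hF.le_card_inter A hA B hB

theorem IsMaxIntersectingFamily.compression (hF : IsMaxIntersectingFamily r k F) (x y : α) :
    IsMaxIntersectingFamily r k (UV.compression {y} {x} F) :=
  ⟨hF.toIsIntersectingFamily.compression x y, (UV.card_compression {y} {x} F).symm ▸ hF.card_le⟩

theorem sum_exchange_lt {w : α → ℕ} (hw : w y < w x) (hx : x ∈ A) (hy : y ∉ A) :
    ∑ v ∈ exchange x y A, w v < ∑ v ∈ A, w v := by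
  rw [exchange, sum_insert (by simp [hy]), ← add_sum_erase A _ hx]
  exact Nat.add_lt_add_right hw _

theorem sum_compression_lt {w : α → ℕ} (hw : w y < w x) (hA : A ∈ F) (hx : x ∈ A) (hy : y ∉ A)
    (hAF : exchange x y A ∉ F) :
    ∑ B ∈ UV.compression {y} {x} F, ∑ v ∈ B, w v < ∑ B ∈ F, ∑ v ∈ B, w v := by
  rw [UV.compression, sum_union UV.compress_disjoint, filter_image, sum_image UV.compress_injOn,
    ← sum_filter_add_sum_filter_not F (fun B => UV.compress {y} {x} B ∈ F),
    add_lt_add_iff_left]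
  refine sum_lt_sum_of_nonempty
    ⟨A, mem_filter.2 ⟨hA, by rwa [compress_singleton hx hy]⟩⟩ fun B hB => ?_
  obtain ⟨hB, hB'⟩ := mem_filter.1 hB
  obtain ⟨hxB, hyB⟩ := mem_and_notMem_of_compress_singleton_ne fun h => hB' (h.symm ▸ hB)
  rw [compress_singleton hxB hyB]
  exact sum_exchange_lt hw hxB hyB

end Shifting

theorem exists_isMaxIntersectingFamily (α : Type*) [DecidableEq α] [Finite α] (r k : ℕ) :
    ∃ F : Finset (Finset α), IsMaxIntersectingFamily r k F := by
  classical
  have := Fintype.ofFinite α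
  obtain ⟨F, hF, hmax⟩ := exists_max_image
    (univ.filter fun F : Finset (Finset α) => IsIntersectingFamily r k F) card
    ⟨∅, mem_filter.2 ⟨mem_univ _, by simp [Set.Sized], by simp⟩⟩
  exact ⟨F, (mem_filter.1 hF).2, fun G hG => hmax G (mem_filter.2 ⟨mem_univ _, hG⟩)⟩

theorem exists_isMaxIntersectingFamily_isShifted (α : Type*) [Finite α] [LinearOrder α]
    [LocallyFiniteOrderBot α] (r k : ℕ) :
    ∃ F : Finset (Finset α), IsMaxIntersectingFamily r k F ∧ IsShifted F := by
  classical
  have := Fintype.ofFinite α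
  obtain ⟨F₀, hF₀⟩ := exists_isMaxIntersectingFamily α r k
  obtain ⟨F, hF, hmin⟩ := exists_min_image
    (univ.filter fun F : Finset (Finset α) => IsMaxIntersectingFamily r k F)
    (fun F => ∑ B ∈ F, ∑ v ∈ B, #(Iic v)) ⟨F₀, mem_filter.2 ⟨mem_univ _, hF₀⟩⟩
  simp only [mem_filter, mem_univ, true_and] at hF hmin
  refine ⟨F, hF, fun A hA x y hyx hx hy => ?_⟩
  by_contra hAF
  have hlt := sum_compression_lt (x := x) (y := y) (w := fun v => #(Iic v))
    (card_lt_card (Iic_ssubset_Iic.2 hyx)) hA hx hy hAF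
  exact hlt.not_ge (hmin _ (hF.compression x y))

section Pushing

variable {α : Type*} [LinearOrder α] {F 𝒜 ℬ : Finset (Finset α)} {A B : Finset α}
  {p z : α} {r k i j a c : ℕ}

section

variable [LocallyFiniteOrderBot α]

theorem Iic_subset_union_of_card_inter_le (hs : IsShifted F)
    (hint : IsIntersectingOn (Iic p) k F) (hA : A ∈ F) (hB : B ∈ F) (hpA : p ∈ A) (hpB : p ∈ B)
    (h : #(A ∩ B ∩ Iic p) ≤ k) : Iic p ⊆ A ∪ B := by
  intro j hj
  by_contra hjAB
  simp only [mem_union, not_or] at hjAB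
  have hjp : j < p := (mem_Iic.1 hj).lt_of_ne (by grind)
  have hlt : #(exchange p j A ∩ B ∩ Iic p) < #(A ∩ B ∩ Iic p) := by
    refine card_lt_card ((ssubset_iff_of_subset fun v => ?_).2 ⟨p, by simp [hpA, hpB], ?_⟩)
    · simp only [mem_inter, mem_exchange]
      grind
    · simp [mem_exchange, hjp.ne']
  exact absurd (hint _ (hs A hA p j hjp hpA hjAB.1) B hB) (by omega)

theorem card_exchange_sdiff_Iic (hz : p < z) (hzA : z ∉ A) :
    #(exchange p z A \ Iic p) = #(A \ Iic p) + 1 := by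
  have hinsert : exchange p z A \ Iic p = insert z (A \ Iic p) := by
    ext v
    simp only [mem_sdiff, mem_exchange, mem_Iic, mem_insert]
    grind
  rw [hinsert, card_insert_of_notMem (by simp [hzA])]

end

variable [Fintype α]

/-- The members of `F` containing `p` in which `p` cannot be replaced by some larger element.
It is nonempty for the first point `p` beyond which `F` is symmetric. -/
def pushBoundary (p : α) (F : Finset (Finset α)) : Finset (Finset α) :=
  {A ∈ F | p ∈ A ∧ ∃ z, p < z ∧ z ∉ A ∧ exchange p z A ∉ F}

theorem mem_pushBoundary : A ∈ pushBoundary p F ↔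
    A ∈ F ∧ p ∈ A ∧ ∃ z, p < z ∧ z ∉ A ∧ exchange p z A ∉ F :=
  mem_filter

variable [LocallyFiniteOrderBot α]

/-- All sets obtained from members of `𝒜` by replacing `p` by a larger element. -/
def push (p : α) (𝒜 : Finset (Finset α)) : Finset (Finset α) :=
  𝒜.biUnion fun A => (A ∪ Iic p)ᶜ.image fun z => exchange p z A

/-- The members of the boundary at `p` with exactly `i` elements in `Iic p`. -/
def pushLayer (p : α) (i : ℕ) (F : Finset (Finset α)) : Finset (Finset α) :=
  {A ∈ pushBoundary p F | #(A ∩ Iic p) = i}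

theorem mem_push : B ∈ push p 𝒜 ↔ ∃ A ∈ 𝒜, ∃ z, (p < z ∧ z ∉ A) ∧ exchange p z A = B := by
  simp [push, and_comm]

theorem mem_pushLayer : A ∈ pushLayer p i F ↔ A ∈ pushBoundary p F ∧ #(A ∩ Iic p) = i :=
  mem_filter

theorem mem_of_mem_pushLayer (hA : A ∈ pushLayer p i F) : A ∈ F ∧ p ∈ A :=
  have h := mem_pushBoundary.1 (mem_pushLayer.1 hA).1
  ⟨h.1, h.2.1⟩

theorem exchange_notMem_of_mem_pushBoundary (hex : IsExchangeable (Iic p)ᶜ F)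
    (hA : A ∈ pushBoundary p F) (hz : p < z) (hzA : z ∉ A) : exchange p z A ∉ F := by
  obtain ⟨-, -, w, hw, hwA, hwF⟩ := mem_pushBoundary.1 hA
  intro hzF
  obtain rfl | hwz := eq_or_ne w z
  · exact hwF hzF
  have hF := hex _ hzF z (by simpa using hz) w (by simpa using hw)
    (mem_exchange.2 (Or.inl rfl)) (by simp [mem_exchange, hwz, hwA])
  have hcomp : exchange z w (exchange p z A) = exchange p w A := by
    ext v
    simp only [mem_exchange]
    grind
  exact hwF (hcomp ▸ hF)

theorem mem_pushBoundary_of_card_inter_le (hF : IsIntersectingFamily r k F) (hs : IsShifted F)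
    (hint : IsIntersectingOn (Iic p) k F) (hn : 2 * r < Fintype.card α + k)
    (hA : A ∈ F) (hB : B ∈ F) (hpA : p ∈ A) (hpB : p ∈ B) (h : #(A ∩ B ∩ Iic p) ≤ k) :
    B ∈ pushBoundary p F := by
  have hsub := Iic_subset_union_of_card_inter_le hs hint hA hB hpA hpB h
  obtain ⟨z, hz⟩ := hF.exists_notMem_union hn hA hB
  have hpz : p < z := lt_of_not_ge fun hzp => hz (hsub (mem_Iic.2 hzp))
  have hzB : z ∉ B := fun hzB => hz (mem_union_right A hzB)
  refine mem_pushBoundary.2 ⟨hB, hpB, z, hpz, hzB, fun hzF => ?_⟩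
  have hlt : #(A ∩ exchange p z B ∩ Iic p) < #(A ∩ B ∩ Iic p) := by
    refine card_lt_card ((ssubset_iff_of_subset fun v => ?_).2 ⟨p, by simp [hpA, hpB], ?_⟩)
    · simp only [mem_inter, mem_exchange, mem_Iic]
      grind
    · simp [mem_exchange, hpz.ne]
  exact absurd (hint A hA _ hzF) (by omega)

theorem mem_pushLayer_of_card_inter_le (hF : IsIntersectingFamily r k F) (hs : IsShifted F)
    (hint : IsIntersectingOn (Iic p) k F) (hn : 2 * r < Fintype.card α + k)
    (hij : i + j = #(Iic p) + k) (hA : A ∈ pushLayer p i F) (hB : B ∈ F) (hpB : p ∈ B)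
    (h : #(A ∩ B ∩ Iic p) ≤ k) : B ∈ pushLayer p j F := by
  obtain ⟨hAF, hpA⟩ := mem_of_mem_pushLayer hA
  refine mem_pushLayer.2
    ⟨mem_pushBoundary_of_card_inter_le hF hs hint hn hAF hB hpA hpB h, ?_⟩
  have hcard := card_inter_add_card_inter_of_subset_union
    (Iic_subset_union_of_card_inter_le hs hint hAF hB hpA hpB h)
  have hAi := (mem_pushLayer.1 hA).2
  have := hint A hAF B hB
  omega

theorem IsIntersectingFamily.sdiff_union_push (hF : IsIntersectingFamily r k F)
    (hint : IsIntersectingOn (Iic p) k F) (h𝒜 : 𝒜 ⊆ F) (hp : ∀ A ∈ 𝒜, p ∈ A)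
    (hℬ : ∀ A ∈ 𝒜, ∀ B ∈ F, p ∈ B → #(A ∩ B ∩ Iic p) ≤ k → B ∈ ℬ)
    (hlt : ∀ A ∈ 𝒜, ∀ B ∈ 𝒜, k < #(A ∩ B ∩ Iic p)) :
    IsIntersectingFamily r k (F \ ℬ ∪ push p 𝒜) := by
  have le_card_of_erase_subset {A B C : Finset α} (h : k < #(A ∩ B ∩ Iic p))
      (hC : (A ∩ B).erase p ⊆ C) : k ≤ #C := by
    have := card_le_card (erase_subset_erase p (inter_subset_left (s₁ := A ∩ B) (s₂ := Iic p)))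
    have := pred_card_le_card_erase (s := A ∩ B ∩ Iic p) (a := p)
    have := card_le_card hC
    omega
  have hmixed : ∀ P ∈ push p 𝒜, ∀ B ∈ F \ ℬ, k ≤ #(P ∩ B) := by
    intro P hP B hB
    obtain ⟨A, hA, z, -, rfl⟩ := mem_push.1 hP
    obtain ⟨hBF, hBℬ⟩ := mem_sdiff.1 hB
    by_cases hpB : p ∈ B
    · refine le_card_of_erase_subset
        (lt_of_not_ge fun h => hBℬ (hℬ A hA B hBF hpB h)) fun v => ?_
      simp only [mem_inter, mem_exchange, mem_erase]
      grind
    · refine (hint A (h𝒜 hA) B hBF).trans (card_le_card fun v => ?_)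
      simp only [mem_inter, mem_exchange]
      grind
  refine ⟨fun P hP => ?_, fun P hP Q hQ => ?_⟩
  · obtain hP | hP := mem_union.1 hP
    · exact hF.sized (mem_sdiff.1 hP).1
    · obtain ⟨A, hA, z, ⟨-, hzA⟩, rfl⟩ := mem_push.1 hP
      exact (card_exchange (hp A hA) hzA).trans (hF.sized (h𝒜 hA))
  · obtain hP | hP := mem_union.1 hP <;> obtain hQ | hQ := mem_union.1 hQ
    · exact hF.le_card_inter P (mem_sdiff.1 hP).1 Q (mem_sdiff.1 hQ).1
    · exact inter_comm P Q ▸ hmixed Q hQ P hP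
    · exact hmixed P hP Q hQ
    · obtain ⟨A, hA, z, -, rfl⟩ := mem_push.1 hP
      obtain ⟨B, hB, w, -, rfl⟩ := mem_push.1 hQ
      refine le_card_of_erase_subset (hlt A hA B hB) fun v => ?_
      simp only [mem_inter, mem_exchange, mem_erase]
      grind

theorem IsMaxIntersectingFamily.card_push_le (hF : IsMaxIntersectingFamily r k F)
    (hex : IsExchangeable (Iic p)ᶜ F) (hint : IsIntersectingOn (Iic p) k F)
    (h𝒜 : 𝒜 ⊆ pushBoundary p F) (hℬF : ℬ ⊆ F)
    (hℬ : ∀ A ∈ 𝒜, ∀ B ∈ F, p ∈ B → #(A ∩ B ∩ Iic p) ≤ k → B ∈ ℬ)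
    (hlt : ∀ A ∈ 𝒜, ∀ B ∈ 𝒜, k < #(A ∩ B ∩ Iic p)) : #(push p 𝒜) ≤ #ℬ := by
  have hdisj : Disjoint (F \ ℬ) (push p 𝒜) := by
    refine disjoint_left.2 fun P hP hP' => ?_
    obtain ⟨A, hA, z, ⟨hz, hzA⟩, rfl⟩ := mem_push.1 hP'
    exact exchange_notMem_of_mem_pushBoundary hex (h𝒜 hA) hz hzA (mem_sdiff.1 hP).1
  have hcard := hF.card_le _ (hF.toIsIntersectingFamily.sdiff_union_push hint
    (fun A hA => (mem_pushBoundary.1 (h𝒜 hA)).1) (fun A hA => (mem_pushBoundary.1 (h𝒜 hA)).2.1)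
    hℬ hlt)
  rw [card_union_of_disjoint hdisj, card_sdiff_of_subset hℬF] at hcard
  have := card_le_card hℬF
  omega

-- A set `B` in `push p 𝒜` determines its origin in `𝒜` by the element of `B` moved back to `p`.
theorem card_filter_exchange_eq_le (hp : ∀ A ∈ 𝒜, p ∈ A) :
    #{A ∈ 𝒜 | ∃ z, (p < z ∧ z ∉ A) ∧ exchange p z A = B} ≤ #(B \ Iic p) := by
  refine (card_le_card (t := (B \ Iic p).image fun z => exchange z p B) ?_).trans card_image_le
  intro A hA
  obtain ⟨hA𝒜, z, ⟨hz, hzA⟩, rfl⟩ := mem_filter.1 hA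
  refine mem_image.2 ⟨z, ?_, exchange_exchange (hp A hA𝒜) hzA⟩
  simpa [mem_exchange] using hz

theorem mul_card_le_mul_card_push (hp : ∀ A ∈ 𝒜, p ∈ A) (ha : ∀ A ∈ 𝒜, #(A \ Iic p) ≤ a)
    (hc : ∀ A ∈ 𝒜, c ≤ #(A ∪ Iic p)ᶜ) : c * #𝒜 ≤ (a + 1) * #(push p 𝒜) := by
  rw [mul_comm, mul_comm (a + 1)]
  refine card_mul_le_card_mul (fun A B => ∃ z, (p < z ∧ z ∉ A) ∧ exchange p z A = B)
    (fun A hA => (hc A hA).trans ?_) fun B hB => ?_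
  · rw [← card_image_of_injOn (f := fun z => exchange p z A)
      ((exchange_injOn_compl p A).mono (by simp +contextual [Set.subset_def]))]
    refine card_le_card fun B hB => mem_filter.2 ?_
    obtain ⟨z, hz, rfl⟩ := mem_image.1 hB
    simp only [mem_compl, mem_union, mem_Iic, not_or, not_le] at hz
    exact ⟨mem_push.2 ⟨A, hA, z, hz.symm, rfl⟩, z, hz.symm, rfl⟩
  · obtain ⟨A, hA, z, ⟨hz, hzA⟩, rfl⟩ := mem_push.1 hB
    refine (card_filter_exchange_eq_le hp).trans ?_
    rw [card_exchange_sdiff_Iic hz hzA]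
    exact Nat.add_le_add_right (ha A hA) 1

theorem card_compl_union_Iic_add (p : α) (A : Finset α) :
    #(A ∪ Iic p)ᶜ + #(A \ Iic p) + #(Iic p) = Fintype.card α := by
  rw [add_assoc, card_sdiff_add_card, card_compl_add_card]

theorem IsIntersectingFamily.card_sdiff_Iic_add_of_mem_pushLayer
    (hF : IsIntersectingFamily r k F) (hA : A ∈ pushLayer p i F) : #(A \ Iic p) + i = r := by
  rw [← (mem_pushLayer.1 hA).2, add_comm, card_inter_add_card_sdiff,
    hF.sized (mem_of_mem_pushLayer hA).1]

theorem IsMaxIntersectingFamily.mul_card_le_mul_card_of_subset_pushLayer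
    (hF : IsMaxIntersectingFamily r k F) (hex : IsExchangeable (Iic p)ᶜ F)
    (hint : IsIntersectingOn (Iic p) k F) (ha : a + i = r)
    (hc : c + a + #(Iic p) = Fintype.card α) (h𝒜 : 𝒜 ⊆ pushLayer p i F) (hℬF : ℬ ⊆ F)
    (hℬ : ∀ A ∈ 𝒜, ∀ B ∈ F, p ∈ B → #(A ∩ B ∩ Iic p) ≤ k → B ∈ ℬ)
    (hlt : ∀ A ∈ 𝒜, ∀ B ∈ 𝒜, k < #(A ∩ B ∩ Iic p)) : c * #𝒜 ≤ (a + 1) * #ℬ := by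
  have hcard A (hA : A ∈ 𝒜) : #(A \ Iic p) = a ∧ #(A ∪ Iic p)ᶜ = c := by
    have := hF.card_sdiff_Iic_add_of_mem_pushLayer (h𝒜 hA)
    have := card_compl_union_Iic_add p A
    omega
  calc c * #𝒜 ≤ (a + 1) * #(push p 𝒜) :=
        mul_card_le_mul_card_push (fun A hA => (mem_of_mem_pushLayer (h𝒜 hA)).2)
          (fun A hA => (hcard A hA).1.le) fun A hA => (hcard A hA).2.ge
    _ ≤ (a + 1) * #ℬ := Nat.mul_le_mul_left _ (hF.card_push_le hex hint
          (h𝒜.trans (filter_subset _ _)) hℬF hℬ hlt)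

theorem IsMaxIntersectingFamily.mul_card_pushLayer_le (hF : IsMaxIntersectingFamily r k F)
    (hs : IsShifted F) (hex : IsExchangeable (Iic p)ᶜ F) (hint : IsIntersectingOn (Iic p) k F)
    (hn : 2 * r < Fintype.card α + k) (hij : i + j = #(Iic p) + k) (hne : i ≠ j)
    (ha : a + i = r) (hc : c + a + #(Iic p) = Fintype.card α) :
    c * #(pushLayer p i F) ≤ (a + 1) * #(pushLayer p j F) := by
  have htight A (hA : A ∈ pushLayer p i F) B (hB : B ∈ F) (hpB : p ∈ B) :=
    mem_pushLayer_of_card_inter_le hF.toIsIntersectingFamily hs hint hn hij hA hB hpB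
  refine hF.mul_card_le_mul_card_of_subset_pushLayer hex hint ha hc Subset.rfl
    (fun A hA => (mem_of_mem_pushLayer hA).1) htight fun A hA B hB => ?_
  obtain ⟨hBF, hpB⟩ := mem_of_mem_pushLayer hB
  refine lt_of_not_ge fun hle => hne ?_
  exact (mem_pushLayer.1 hB).2.symm.trans (mem_pushLayer.1 (htight A hA B hBF hpB hle)).2

theorem IsMaxIntersectingFamily.pushLayer_nonempty (hF : IsMaxIntersectingFamily r k F)
    (hs : IsShifted F) (hex : IsExchangeable (Iic p)ᶜ F) (hint : IsIntersectingOn (Iic p) k F)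
    (hn : 2 * r < Fintype.card α + k) (hij : i + j = #(Iic p) + k) (hne : i ≠ j)
    (h : (pushLayer p i F).Nonempty) : (pushLayer p j F).Nonempty := by
  obtain ⟨A, hA⟩ := h
  obtain ⟨-, -, z, hz, hzA, -⟩ := mem_pushBoundary.1 (mem_pushLayer.1 hA).1
  have hle := hF.mul_card_pushLayer_le hs hex hint hn hij hne
    (hF.card_sdiff_Iic_add_of_mem_pushLayer hA) (card_compl_union_Iic_add p A)
  have hc : 0 < #(A ∪ Iic p)ᶜ := card_pos.2 ⟨z, by simp [hz, hzA]⟩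
  exact card_pos.1 (Nat.pos_of_mul_pos_left ((Nat.mul_pos hc (card_pos.2 ⟨A, hA⟩)).trans_le hle))

theorem IsMaxIntersectingFamily.mul_card_pushLayer_filter_notMem_le
    (hF : IsMaxIntersectingFamily r k F) (hs : IsShifted F) (hex : IsExchangeable (Iic p)ᶜ F)
    (hint : IsIntersectingOn (Iic p) k F) (hn : 2 * r < Fintype.card α + k)
    (hi : i + i = #(Iic p) + k) (ha : a + i = r) (hc : c + a + #(Iic p) = Fintype.card α)
    {l : α} (hl : l ≤ p) :
    c * #{A ∈ pushLayer p i F | l ∉ A} ≤ (a + 1) * #{A ∈ pushLayer p i F | l ∈ A} := by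
  have hcover A (hA : A ∈ pushLayer p i F) B (hB : B ∈ F) (hpB : p ∈ B)
      (hle : #(A ∩ B ∩ Iic p) ≤ k) : l ∈ A ∪ B :=
    have ⟨hAF, hpA⟩ := mem_of_mem_pushLayer hA
    Iic_subset_union_of_card_inter_le hs hint hAF hB hpA hpB hle (mem_Iic.2 hl)
  refine hF.mul_card_le_mul_card_of_subset_pushLayer hex hint ha hc (filter_subset _ _)
    (fun A hA => (mem_of_mem_pushLayer (mem_filter.1 hA).1).1) (fun A hA B hB hpB hle => ?_)
    fun A hA B hB => ?_ <;> obtain ⟨hA, hlA⟩ := mem_filter.1 hA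
  · exact mem_filter.2
      ⟨mem_pushLayer_of_card_inter_le hF.toIsIntersectingFamily hs hint hn hi hA hB hpB hle,
        (mem_union.1 (hcover A hA B hB hpB hle)).resolve_left hlA⟩
  · obtain ⟨hB, hlB⟩ := mem_filter.1 hB
    obtain ⟨hBF, hpB⟩ := mem_of_mem_pushLayer hB
    refine lt_of_not_ge fun hle => ?_
    exact (mem_union.1 (hcover A hA B hBF hpB hle)).elim hlA hlB

theorem sum_card_filter_eq_card_mul {β γ : Type*} {s : Finset β} {t : Finset γ}
    {R : β → γ → Prop} [∀ b c, Decidable (R b c)] {m : ℕ} (h : ∀ c ∈ t, #{b ∈ s | R b c} = m) :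
    ∑ b ∈ s, #{c ∈ t | R b c} = #t * m :=
  (sum_card_bipartiteAbove_eq_sum_card_bipartiteBelow R).trans (sum_const_nat h)

theorem card_filter_mem_Iio (hA : A ∈ pushLayer p i F) :
    #{l ∈ Iio p | l ∈ A} = i - 1 ∧ #{l ∈ Iio p | l ∉ A} = #(Iic p) - i := by
  obtain ⟨-, hpA⟩ := mem_of_mem_pushLayer hA
  have hp : p ∈ A ∩ Iic p := by simp [hpA]
  have hmem : #{l ∈ Iio p | l ∈ A} = i - 1 := by
    rw [← (mem_pushLayer.1 hA).2, ← card_erase_of_mem hp]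
    congr 1
    ext v
    simp only [mem_filter, mem_Iio, mem_erase, mem_inter, mem_Iic, lt_iff_le_and_ne]
    tauto
  have hi : 0 < i := (mem_pushLayer.1 hA).2 ▸ card_pos.2 ⟨p, hp⟩
  have hsum := card_filter_add_card_filter_not (s := Iio p) (fun l => l ∈ A)
  have hIio := card_erase_of_mem (mem_Iic.2 (le_refl p))
  rw [Iic_erase] at hIio
  omega

-- Double counting of the pairs `l < p`, `A` in the layer, according to whether `l ∈ A`.
theorem IsMaxIntersectingFamily.mul_le_of_pushLayer_nonempty (hF : IsMaxIntersectingFamily r k F)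
    (hs : IsShifted F) (hex : IsExchangeable (Iic p)ᶜ F) (hint : IsIntersectingOn (Iic p) k F)
    (hn : 2 * r < Fintype.card α + k) (hi : i + i = #(Iic p) + k) (ha : a + i = r)
    (hc : c + a + #(Iic p) = Fintype.card α) (hne : (pushLayer p i F).Nonempty) :
    c * (#(Iic p) - i) ≤ (a + 1) * (i - 1) := by
  have hsum : c * ∑ l ∈ Iio p, #{A ∈ pushLayer p i F | l ∉ A} ≤
      (a + 1) * ∑ l ∈ Iio p, #{A ∈ pushLayer p i F | l ∈ A} := by
    rw [mul_sum, mul_sum]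
    exact sum_le_sum fun l hl =>
      hF.mul_card_pushLayer_filter_notMem_le hs hex hint hn hi ha hc (mem_Iio.1 hl).le
  rw [sum_card_filter_eq_card_mul fun A hA => (card_filter_mem_Iio hA).1,
    sum_card_filter_eq_card_mul fun A hA => (card_filter_mem_Iio hA).2,
    mul_left_comm, mul_left_comm (a + 1)] at hsum
  exact Nat.le_of_mul_le_mul_left hsum (card_pos.2 hne)

-- Pushing layer `i` against layer `j` and conversely would make each of them larger than the other.
theorem IsMaxIntersectingFamily.two_mul_eq_of_mem_pushLayer (hF : IsMaxIntersectingFamily r k F)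
    (hs : IsShifted F) (hex : IsExchangeable (Iic p)ᶜ F) (hint : IsIntersectingOn (Iic p) k F)
    (hn : 2 * r + 2 ≤ Fintype.card α + k) (hA : A ∈ pushLayer p i F) :
    i + i = #(Iic p) + k := by
  by_contra hi
  have hiIic : i ≤ #(Iic p) := (mem_pushLayer.1 hA).2 ▸ card_le_card inter_subset_right
  obtain ⟨j, hij⟩ : ∃ j, i + j = #(Iic p) + k := ⟨#(Iic p) + k - i, by omega⟩
  have push_layer {i j a b : ℕ} (hij : i + j = #(Iic p) + k) (hne : i ≠ j) (ha : a + i = r)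
      (hb : b + j = r) {A : Finset α} (hA : A ∈ pushLayer p i F) :
      (b + 2) * #(pushLayer p i F) ≤ (a + 1) * #(pushLayer p j F) := by
    have ha' := hF.card_sdiff_Iic_add_of_mem_pushLayer hA
    have hc := card_compl_union_Iic_add p A
    obtain rfl : #(A \ Iic p) = a := by omega
    exact (Nat.mul_le_mul_right _ (by omega)).trans
      (hF.mul_card_pushLayer_le hs hex hint (by omega) hij hne ha hc)
  have ha := hF.card_sdiff_Iic_add_of_mem_pushLayer hA
  obtain ⟨B, hB⟩ := hF.pushLayer_nonempty hs hex hint (by omega) hij (by omega) ⟨A, hA⟩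
  have hb := hF.card_sdiff_Iic_add_of_mem_pushLayer hB
  have hle := push_layer hij (by omega) ha hb hA
  have hle' := push_layer (by omega) (by omega) hb ha hB
  have hpos : 0 < #(pushLayer p i F) := card_pos.2 ⟨A, hA⟩
  nlinarith

theorem IsShifted.isExchangeable_compl_Iio (hs : IsShifted F) (hex : IsExchangeable (Iic p)ᶜ F)
    (hp : pushBoundary p F = ∅) : IsExchangeable (Iio p)ᶜ F := by
  intro A hA x hx y hy hxA hyA
  simp only [mem_compl, mem_Iio, not_lt] at hx hy
  rcases lt_trichotomy x y with hxy | rfl | hyx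
  · obtain rfl | hpx := hx.eq_or_lt
    · by_contra hAF
      exact eq_empty_iff_forall_notMem.1 hp A (mem_pushBoundary.2 ⟨hA, hxA, y, hxy, hyA, hAF⟩)
    · exact hex A hA x (by simpa using hpx) y (by simpa using hpx.trans hxy) hxA hyA
  · exact absurd hxA hyA
  · exact hs A hA x y hyx hxA hyA

theorem IsIntersectingFamily.exists_pushBoundary_nonempty (hF : IsIntersectingFamily r k F)
    (hs : IsShifted F) (hne : F.Nonempty) (hk : 0 < k) (hn : 2 * r < Fintype.card α + k) :
    ∃ p, IsExchangeable (Iic p)ᶜ F ∧ (pushBoundary p F).Nonempty := by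
  classical
  obtain ⟨S, hS, hmin⟩ := exists_min_image
    (univ.filter fun S : Finset α => IsLowerSet (S : Set α) ∧ IsExchangeable Sᶜ F) card
    ⟨univ, by simp [isLowerSet_univ, IsExchangeable]⟩
  simp only [mem_filter, mem_univ, true_and] at hS hmin
  obtain ⟨hlower, hex⟩ := hS
  have hSne : S.Nonempty := by
    obtain ⟨A, hA⟩ := hne
    have hk' := hk.trans_le (hF.isIntersectingOn hs hlower hex hn A hA A hA)
    exact (card_pos.1 hk').mono inter_subset_right
  have hSIic : S = Iic (S.max' hSne) := by
    ext v
    exact ⟨fun hv => mem_Iic.2 (S.le_max' v hv),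
      fun hv => hlower (mem_Iic.1 hv) (S.max'_mem hSne)⟩
  generalize S.max' hSne = p at hSIic
  subst hSIic
  refine ⟨p, hex, nonempty_iff_ne_empty.2 fun hp => ?_⟩
  refine (hmin (Iio p) ⟨?_, hs.isExchangeable_compl_Iio hex hp⟩).not_gt
    (card_lt_card (Iic_erase p ▸ erase_ssubset (mem_Iic.2 le_rfl)))
  simpa using isLowerSet_Iio p

theorem IsMaxIntersectingFamily.exists_isExchangeable_compl_Iic
    (hF : IsMaxIntersectingFamily r k F) (hs : IsShifted F) (hne : F.Nonempty) (hk : 0 < k)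
    (hn : 2 * r + 2 ≤ Fintype.card α + k) :
    ∃ p q, #(Iic p) = k + 2 * q ∧ IsExchangeable (Iic p)ᶜ F ∧
      (q : ℤ) * (Fintype.card α + 2 * k - 2 * r - 2) ≤ (r - k + 1) * (k - 1) := by
  obtain ⟨p, hex, A, hA⟩ := hF.exists_pushBoundary_nonempty hs hne hk (by omega)
  have hint : IsIntersectingOn (Iic p) k F :=
    hF.isIntersectingOn hs (by simpa using isLowerSet_Iic p) hex (by omega)
  have hAF := (mem_pushBoundary.1 hA).1
  obtain ⟨q, hq⟩ : ∃ q, #(A ∩ Iic p) = k + q :=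
    Nat.exists_eq_add_of_le (inter_self A ▸ hint A hAF A hAF)
  have hA' : A ∈ pushLayer p (k + q) F := mem_pushLayer.2 ⟨hA, hq⟩
  have hi := hF.two_mul_eq_of_mem_pushLayer hs hex hint hn hA'
  have ha := hF.card_sdiff_Iic_add_of_mem_pushLayer hA'
  have hc := card_compl_union_Iic_add p A
  have hle := hF.mul_le_of_pushLayer_nonempty hs hex hint (by omega) hi ha hc ⟨A, hA'⟩
  refine ⟨p, q, by omega, hex, ?_⟩
  rw [show #(Iic p) - (k + q) = q by omega] at hle
  obtain ⟨s, rfl⟩ := Nat.exists_eq_add_of_le' hk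
  rw [show s + 1 + q - 1 = s + q by omega] at hle
  have hc' : (Fintype.card α : ℤ) = #(A ∪ Iic p)ᶜ + #(A \ Iic p) + (s + 1 + 2 * q) := by omega
  rw [hc', ← ha]
  zify at hle
  push_cast
  linarith

end Pushing

section ExchangeableOnLowerSet

variable {α : Type*} [LinearOrder α] {F : Finset (Finset α)} {S T A B : Finset α} {k q : ℕ}

-- While some `j ∈ S` is uncovered, exchange an element of `A ∩ B ∩ T` for `j` in `B`.
theorem IsIntersectingOn.exists_subset_union (hint : IsIntersectingOn T k F) (hs : IsShifted F)
    (hS : IsLowerSet (S : Set α)) (hex : IsExchangeable S F) (hST : S ⊆ T) (hk : 0 < k)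
    (hA : A ∈ F) (hB : B ∈ F) : ∃ C ∈ F, #(C ∩ T) = #(B ∩ T) ∧ S ⊆ A ∪ C := by
  induction h : #(A ∩ B ∩ T) generalizing B with
  | zero => exact absurd (hint A hA B hB) (by omega)
  | succ d ih =>
    by_cases hsub : S ⊆ A ∪ B
    · exact ⟨B, hB, rfl, hsub⟩
    obtain ⟨j, hj, hjAB⟩ := not_subset.1 hsub
    obtain ⟨c, hcmem⟩ : (A ∩ B ∩ T).Nonempty := card_pos.1 (by omega)
    obtain ⟨hcA, hcB, hcT⟩ : c ∈ A ∧ c ∈ B ∧ c ∈ T := by simpa using hcmem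
    simp only [mem_union, not_or] at hjAB
    have hC : exchange c j B ∈ F := by
      by_cases hcS : c ∈ S
      · exact hex B hB c hcS j hj hcB hjAB.2
      · exact hs B hB c j (lt_of_not_ge fun hcj => hcS (hS hcj hj)) hcB hjAB.2
    have htrace : exchange c j B ∩ T = exchange c j (B ∩ T) := by
      ext v
      simp only [mem_inter, mem_exchange]
      grind
    have hinter : A ∩ exchange c j B ∩ T = (A ∩ B ∩ T).erase c := by
      ext v
      simp only [mem_inter, mem_exchange, mem_erase]
      grind
    obtain ⟨C, hCF, hCT, hCS⟩ :=
      ih hC (by rw [hinter, card_erase_of_mem hcmem, h, Nat.add_sub_cancel])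
    exact ⟨C, hCF, by rw [hCT, htrace, card_exchange (by simp [*]) (by simp [*])], hCS⟩

theorem IsIntersectingOn.le_card_inter_or_lt_card_inter (hint : IsIntersectingOn T k F)
    (hs : IsShifted F) (hS : IsLowerSet (S : Set α)) (hex : IsExchangeable S F) (hST : S ⊆ T)
    (hk : 0 < k) (hcard : k + 2 * q ≤ #S) :
    (∀ A ∈ F, k + q ≤ #(A ∩ S)) ∨ ∀ B ∈ F, k + q < #(B ∩ T) := by
  by_contra! ⟨⟨A, hA, hAS⟩, B, hB, hBT⟩
  obtain ⟨C, hC, hCT, hcover⟩ := hint.exists_subset_union hs hS hex hST hk hA hB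
  have hS' := card_inter_add_card_inter_of_subset_union hcover
  have hT := hint A hA C hC
  have split_card (D : Finset α) : #(D ∩ T) = #(D ∩ S) + #(D ∩ (T \ S)) := by
    rw [← inter_sdiff_assoc, ← card_inter_add_card_sdiff (D ∩ T) S, inter_assoc,
      inter_eq_right.2 hST]
  have hCsplit := split_card C
  have hACsplit := split_card (A ∩ C)
  have hle : #(A ∩ C ∩ (T \ S)) ≤ #(C ∩ (T \ S)) :=
    card_le_card (inter_subset_inter_right inter_subset_right)
  omega

end ExchangeableOnLowerSet

section FranklFamily

variable {n r k m i : ℕ} {F : Finset (Finset (Fin n))} {A B : Finset (Fin n)} {x y v : Fin n}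

/-- The initial segment `[m]` of `[n]`; it is all of `Fin n` when `n ≤ m`. -/
def initSeg (n m : ℕ) : Finset (Fin n) := {v | (v : ℕ) < m}

/-- The Frankl family `B_i` of the `r`-subsets of `[n]` having at least `k + i` elements in
`[k + 2i]`. -/
def franklFamily (n r k i : ℕ) : Finset (Finset (Fin n)) :=
  {A ∈ powersetCard r univ | k + i ≤ #(A ∩ initSeg n (k + 2 * i))}

theorem mem_initSeg : v ∈ initSeg n m ↔ (v : ℕ) < m := by
  simp [initSeg]

theorem card_initSeg (h : m ≤ n) : #(initSeg n m) = m := by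
  simp [initSeg, Fin.card_filter_val_lt, h]

theorem isLowerSet_initSeg (n m : ℕ) : IsLowerSet (initSeg n m : Set (Fin n)) :=
  fun _ _ hle hv => mem_initSeg.2 ((Fin.le_def.1 hle).trans_lt (mem_initSeg.1 hv))

theorem initSeg_mono (n : ℕ) : Monotone (initSeg n) :=
  fun _ _ hle _ hv => mem_initSeg.2 ((mem_initSeg.1 hv).trans_le hle)

theorem subset_franklFamily (hF : (F : Set (Finset (Fin n))).Sized r)
    (h : ∀ A ∈ F, k + i ≤ #(A ∩ initSeg n (k + 2 * i))) : F ⊆ franklFamily n r k i :=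
  fun A hA => mem_filter.2 ⟨mem_powersetCard.2 ⟨subset_univ A, hF hA⟩, h A hA⟩

/-- The mirror image of the complement of `A`; mirroring keeps the complements of the members of a
left-compressed family left-compressed. -/
def revCompl (A : Finset (Fin n)) : Finset (Fin n) := {v | v.rev ∉ A}

theorem mem_revCompl : v ∈ revCompl A ↔ v.rev ∉ A := by
  simp [revCompl]

theorem revCompl_involutive : Function.Involutive (revCompl (n := n)) := by
  intro A
  ext v
  simp [mem_revCompl]

theorem card_revCompl_add_card (A : Finset (Fin n)) : #(revCompl A) + #A = n := by
  have hmap : revCompl A = Aᶜ.map Fin.revPerm.toEmbedding := by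
    ext v
    simp [mem_revCompl]
  rw [hmap, card_map, card_compl_add_card, Fintype.card_fin]

theorem revCompl_union (A B : Finset (Fin n)) :
    revCompl (A ∪ B) = revCompl A ∩ revCompl B := by
  ext v
  simp [mem_revCompl]

theorem revCompl_exchange (hx : x ∈ A) (hy : y ∉ A) :
    revCompl (exchange x y A) = exchange y.rev x.rev (revCompl A) := by
  ext v
  simp only [mem_revCompl, mem_exchange, ← Fin.rev_eq_iff]
  grind

theorem IsIntersectingFamily.image_revCompl (hF : IsIntersectingFamily r k F)
    (hn : 2 * r ≤ n + k) :
    IsIntersectingFamily (n - r) (n + k - 2 * r) (F.image revCompl) := by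
  refine ⟨?_, ?_⟩ <;> simp only [Set.Sized, mem_coe, forall_mem_image]
  · intro A hA
    rw [← hF.sized hA]
    exact Nat.eq_sub_of_add_eq (card_revCompl_add_card A)
  · intro A hA B hB
    have hcompl := card_revCompl_add_card (A ∪ B)
    have hunion := card_union_add_card_inter A B
    have hAB := hF.le_card_inter A hA B hB
    rw [hF.sized hA, hF.sized hB] at hunion
    rw [← revCompl_union]
    omega

theorem IsMaxIntersectingFamily.image_revCompl (hF : IsMaxIntersectingFamily r k F) (hr : r ≤ n)
    (hn : 2 * r ≤ n + k) :
    IsMaxIntersectingFamily (n - r) (n + k - 2 * r) (F.image revCompl) := by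
  refine ⟨hF.toIsIntersectingFamily.image_revCompl hn, fun G hG => ?_⟩
  have hG' := hG.image_revCompl (by omega)
  rw [show n - (n - r) = r by omega, show n + (n + k - 2 * r) - 2 * (n - r) = k by omega] at hG'
  have hle := hF.card_le _ hG'
  rwa [card_image_of_injective _ revCompl_involutive.injective] at hle ⊢

theorem IsShifted.image_revCompl (hs : IsShifted F) : IsShifted (F.image revCompl) := by
  simp only [IsShifted, forall_mem_image, mem_revCompl, not_not]
  intro A hA x y hyx hx hy
  refine mem_image.2 ⟨_, hs A hA y.rev x.rev (Fin.rev_lt_rev.2 hyx) hy hx, ?_⟩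
  rw [revCompl_exchange hy hx, Fin.rev_rev, Fin.rev_rev]

theorem IsExchangeable.of_image_revCompl {S T : Finset (Fin n)}
    (h : IsExchangeable T (F.image revCompl)) (hST : ∀ v ∈ S, v.rev ∈ T) :
    IsExchangeable S F := by
  intro A hA x hx y hy hxA hyA
  have hex := h _ (mem_image_of_mem _ hA) y.rev (hST y hy) x.rev (hST x hx)
    (by simpa [mem_revCompl] using hyA) (by simpa [mem_revCompl] using hxA)
  rwa [← revCompl_exchange hxA hyA,
    revCompl_involutive.injective.mem_finset_image] at hex

theorem IsIntersectingFamily.card_le_card_franklFamily_of_le (hF : IsIntersectingFamily r k F)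
    (hk : k ≤ n) (hn : n + k ≤ 2 * r) : #F ≤ #(franklFamily n r k ((n - k) / 2)) := by
  refine card_le_card (subset_franklFamily hF.sized fun A hA => ?_)
  have hsplit := card_inter_add_card_sdiff A (initSeg n (k + 2 * ((n - k) / 2)))
  have hsdiff : #(A \ initSeg n (k + 2 * ((n - k) / 2))) ≤ n - (k + 2 * ((n - k) / 2)) := by
    refine (card_le_card (sdiff_subset_sdiff (subset_univ A) Subset.rfl)).trans_eq ?_
    rw [card_univ_sdiff, card_initSeg (by omega), Fintype.card_fin]
  have hr := hF.sized hA
  omega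

theorem IsIntersectingFamily.card_le_card_franklFamily_of_eq (hF : IsIntersectingFamily r k F)
    (hk : 0 < k) (hkr : k ≤ r) (hn : n + k = 2 * r + 1) : #F ≤ #(franklFamily n r k (r - k)) := by
  have hF' := hF.image_revCompl (by omega)
  rw [show n + k - 2 * r = 1 by omega] at hF'
  have hint : (F.image revCompl : Set (Finset (Fin n))).Intersecting := by
    intro A hA B hB hdisj
    have hcard := hF'.le_card_inter A hA B hB
    rw [disjoint_iff_inter_eq_empty.1 hdisj, card_empty] at hcard
    omega
  have hekr := erdos_ko_rado hint hF'.sized (by omega)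
  rw [card_image_of_injective _ revCompl_involutive.injective] at hekr
  calc #F ≤ (n - 1).choose (n - r - 1) := hekr
    _ = #(powersetCard r (initSeg n (n - 1))) := by
      rw [card_powersetCard, card_initSeg (by omega)]
      exact Nat.choose_symm_of_eq_add (by omega)
    _ ≤ #(franklFamily n r k (r - k)) := by
      refine card_le_card (subset_franklFamily (fun A hA => (mem_powersetCard.1 hA).2)
        fun A hA => ?_)
      obtain ⟨hAsub, hAr⟩ := mem_powersetCard.1 hA
      rw [show k + 2 * (r - k) = n - 1 by omega, inter_eq_left.2 hAsub]
      omega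

theorem IsMaxIntersectingFamily.exists_isExchangeable_compl_initSeg
    (hF : IsMaxIntersectingFamily r k F) (hs : IsShifted F) (hne : F.Nonempty) (hk : 0 < k)
    (hn : 2 * r + 2 ≤ n + k) :
    ∃ q, k + 2 * q ≤ n ∧ IsExchangeable (initSeg n (k + 2 * q))ᶜ F ∧
      (q : ℤ) * (n + 2 * k - 2 * r - 2) ≤ (r - k + 1) * (k - 1) := by
  obtain ⟨p, q, hp, hex, hq⟩ := hF.exists_isExchangeable_compl_Iic hs hne hk (by simpa using hn)
  rw [Fin.card_Iic] at hp
  have hIic : Iic p = initSeg n (k + 2 * q) := by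
    ext v
    simp only [mem_Iic, mem_initSeg, ← hp, Nat.lt_succ_iff, Fin.le_def]
  exact ⟨q, hp ▸ p.2, hIic ▸ hex, by simpa using hq⟩

theorem IsMaxIntersectingFamily.exists_isExchangeable_initSeg
    (hF : IsMaxIntersectingFamily r k F) (hs : IsShifted F) (hne : F.Nonempty) (hr : r ≤ n)
    (hk : 2 ≤ k) (hn : 2 * r < n + k) :
    ∃ m q, m + 2 * q + k = 2 * r ∧ IsExchangeable (initSeg n m) F ∧
      (q : ℤ) * (n + 2 * k - 2 * r - 2) ≤ (r - k + 1) * (n + k - 2 * r - 1) := by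
  obtain ⟨q, hqn, hex, hq⟩ := (hF.image_revCompl hr hn.le).exists_isExchangeable_compl_initSeg
    hs.image_revCompl (hne.image _) (by omega) (by omega)
  refine ⟨2 * r - k - 2 * q, q, by omega, hex.of_image_revCompl fun v hv => ?_, ?_⟩
  · rw [mem_initSeg] at hv
    rw [mem_compl, mem_initSeg, Fin.val_rev]
    omega
  · rw [Nat.cast_sub hr, Nat.cast_sub hn.le] at hq
    push_cast at hq
    linarith

theorem IsIntersectingFamily.le_of_nonempty (hF : IsIntersectingFamily r k F)
    (hne : F.Nonempty) : k ≤ r ∧ r ≤ n := by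
  obtain ⟨A, hA⟩ := hne
  have hk := hF.le_card_inter A hA A hA
  have hn := card_le_univ A
  rw [inter_self, hF.sized hA] at hk
  rw [hF.sized hA, Fintype.card_fin] at hn
  exact ⟨hk, hn⟩

theorem IsMaxIntersectingFamily.exists_subset_franklFamily (hF : IsMaxIntersectingFamily r k F)
    (hs : IsShifted F) (hne : F.Nonempty) (hk : 0 < k) (hn : 2 * r + 2 ≤ n + k) :
    ∃ i, k + 2 * i ≤ n ∧ F ⊆ franklFamily n r k i := by
  obtain ⟨hkr, hrn⟩ := hF.le_of_nonempty hne
  obtain ⟨q, hqn, hex, hq⟩ := hF.exists_isExchangeable_compl_initSeg hs hne hk hn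
  have hint : IsIntersectingOn (initSeg n (k + 2 * q)) k F :=
    hF.isIntersectingOn hs (isLowerSet_initSeg n _) hex (by simpa using by omega)
  obtain _ | q := q
  · exact ⟨0, hqn, subset_franklFamily hF.sized fun A hA => by simpa using hint A hA A hA⟩
  have hD : (0 : ℤ) < n + 2 * k - 2 * r - 2 := by omega
  have hk2 : 2 ≤ k := by
    have hpos : (0 : ℤ) < ((q + 1 : ℕ) : ℤ) * (n + 2 * k - 2 * r - 2) :=
      mul_pos (by positivity) hD
    have := pos_of_mul_pos_right (hpos.trans_le hq) (by omega)
    omega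
  obtain ⟨m, q', hm, hex', hq'⟩ :=
    hF.exists_isExchangeable_initSeg hs hne hrn hk2 (by omega)
  have hsum : ((q + 1 : ℕ) + q' : ℤ) ≤ r - k + 1 := by
    refine le_of_mul_le_mul_right ?_ hD
    linarith
  have hexq : IsExchangeable (initSeg n (k + 2 * q)) F := hex'.mono (initSeg_mono n (by omega))
  obtain h | h := hint.le_card_inter_or_lt_card_inter hs (isLowerSet_initSeg n _) hexq
    (initSeg_mono n (by omega)) hk (card_initSeg (by omega)).ge
  · exact ⟨q, by omega, subset_franklFamily hF.sized h⟩
  · exact ⟨q + 1, hqn, subset_franklFamily hF.sized h⟩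

theorem IsIntersectingFamily.exists_card_le_card_franklFamily (hF : IsIntersectingFamily r k F)
    (hne : F.Nonempty) (hk : 0 < k) : ∃ i, k + 2 * i ≤ n ∧ #F ≤ #(franklFamily n r k i) := by
  obtain ⟨hkr, hrn⟩ := hF.le_of_nonempty hne
  rcases lt_trichotomy (n + k) (2 * r + 1) with hn | hn | hn
  · exact ⟨(n - k) / 2, by omega, hF.card_le_card_franklFamily_of_le (by omega) (by omega)⟩
  · exact ⟨r - k, by omega, hF.card_le_card_franklFamily_of_eq hk hkr hn⟩
  · obtain ⟨G, hG, hs⟩ := exists_isMaxIntersectingFamily_isShifted (Fin n) r k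
    have hFG := hG.card_le F hF
    obtain ⟨i, hi, hsub⟩ := hG.exists_subset_franklFamily hs
      (card_pos.1 ((card_pos.2 hne).trans_le hFG)) hk hn
    exact ⟨i, hi, hFG.trans (card_le_card hsub)⟩

end FranklFamily

end CompleteIntersection

/-- Ahlswede–Khachatrian complete intersection theorem. An `r`-uniform
`k`-intersecting hypergraph on `[n]` (here `Fin n`) has at most `max_{0 ≤ i ≤ (n-k)/2} |B_i|`
edges, where `B_i` consists of all `r`-subsets `E` with `|E ∩ [k+2i]| ≥ k+i`. -/
theorem stmt_5 (n r k : ℕ) (hk : 1 ≤ k) (hkr : k < r)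
    (E : Finset (Finset (Fin n)))
    (hunif : ∀ e ∈ E, e.card = r)
    (hint : ∀ e₁ ∈ E, ∀ e₂ ∈ E, k ≤ (e₁ ∩ e₂).card) :
    E.card ≤ (Finset.range ((n - k) / 2 + 1)).sup (fun i =>
      ((Finset.powersetCard r (Finset.univ : Finset (Fin n))).filter
        (fun e => k + i ≤ (e ∩ (Finset.univ.filter (fun v : Fin n => (v : ℕ) < k + 2 * i))).card)).card) := by
  obtain rfl | hne := E.eq_empty_or_nonempty
  · simp
  have hE : CompleteIntersection.IsIntersectingFamily r k E := ⟨fun e he => hunif e he, hint⟩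
  obtain ⟨i, hi, hle⟩ := hE.exists_card_le_card_franklFamily hne hk
  have hi' : i ∈ Finset.range ((n - k) / 2 + 1) := Finset.mem_range.2 (by omega)
  exact hle.trans
    (Finset.le_sup (f := fun i => (CompleteIntersection.franklFamily n r k i).card) hi')
end

section
/- Let $1 \le k < r$ and suppose $n \ge (k+1)(r-k+1)$. Then every $r$-uniform $k$-intersecting hypergraph on a vertex set of $n$ elements has at most $\binom{n-k}{r-k}$ edges. -/
/-!
Give an `i`-set the weight `weight N r i`, the number of its extensions to an `r`-set by elements
of `N` fresh points. An `r`-uniform family on `n` points has weight equal to its size when `N = 0`,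
and a `k`-intersecting family on `k` points has weight at most `(n - k).choose (r - k)` when
`N = n - k`. So it suffices to show that a `k`-intersecting family on `insert a s` can be traded for
one on `s`, with `N` increased by one, without losing weight.

Take the family closed under adding `a` and under replacing `a` by another point. The sets avoiding
`a` absorb the weight of their extensions by `a`, since
`weight (N + 1) r i = weight N r i + weight N r (i + 1)`. Let `𝒟` collect the remaining traces
`A ⊆ s`, those with `insert a A` but not `A` in the family. Two members `A`, `B` of `𝒟` with
`#(A ∩ B) < k` satisfy `A ∪ B = s` and `#A + #B + 1 = #s + k`. Hence from each two distinct sizes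
`i`, `j` with `i + j + 1 = #s + k` it is enough to discard one, and log-concavity of binomial
coefficients says that the other then gains enough weight. For the self-conflicting size
`2 * i + 1 = #s + k` one keeps the sets that miss a point `m` chosen by averaging; this is where
`(k + 1) * (r - k + 1) ≤ n` is needed.
-/

open Finset

open scoped FinsetFamily

namespace ErdosKoRado

section Weight

/-- The number of ways to extend an `i`-set to an `r`-set by elements of a disjoint `N`-set. The
case distinction keeps the truncated subtraction from giving weight `1` to sets that are too large.
-/
def weight (N r i : ℕ) : ℕ := if i ≤ r then N.choose (r - i) else 0

variable {N r i j : ℕ}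

lemma weight_of_lt (h : r < i) : weight N r i = 0 := if_neg h.not_ge

lemma weight_add_left (N i p : ℕ) : weight N (i + p) i = N.choose p := by simp [weight]

lemma weight_succ_left (N r i : ℕ) :
    weight (N + 1) r i = weight N r i + weight N r (i + 1) := by
  rcases lt_trichotomy i r with hir | rfl | hri
  · obtain ⟨p, rfl⟩ := Nat.exists_eq_add_of_lt hir
    rw [add_assoc, weight_add_left, weight_add_left, ← add_assoc, Nat.add_right_comm,
      weight_add_left, Nat.choose_succ_succ', add_comm]
  · simp [weight]
  · simp only [weight_of_lt hri, weight_of_lt (hri.trans i.lt_succ_self)]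

lemma add_one_mul_weight_succ (N r i : ℕ) :
    (N + 1) * weight N r (i + 1) = weight (N + 1) r i * (r - i) := by
  rcases lt_or_ge i r with hir | hri
  · obtain ⟨p, rfl⟩ := Nat.exists_eq_add_of_lt hir
    rw [Nat.add_right_comm, weight_add_left, Nat.add_right_comm, add_assoc, weight_add_left,
      Nat.add_one_mul_choose_eq, Nat.add_sub_cancel_left]
  · rw [weight_of_lt (by omega), Nat.sub_eq_zero_of_le hri, mul_zero, mul_zero]

lemma choose_mul_choose_le_choose_succ_mul_choose_succ {p q : ℕ} (h : p + q + 1 ≤ N) :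
    N.choose p * N.choose q ≤ N.choose (p + 1) * N.choose (q + 1) := by
  refine Nat.le_of_mul_le_mul_right (c := (p + 1) * (q + 1)) ?_ (by positivity)
  calc N.choose p * N.choose q * ((p + 1) * (q + 1))
      ≤ N.choose p * N.choose q * ((N - q) * (N - p)) := by gcongr <;> omega
    _ = N.choose p * (N - p) * (N.choose q * (N - q)) := by ring
    _ = N.choose (p + 1) * (p + 1) * (N.choose (q + 1) * (q + 1)) := by
        rw [Nat.choose_succ_right_eq, Nat.choose_succ_right_eq]
    _ = N.choose (p + 1) * N.choose (q + 1) * ((p + 1) * (q + 1)) := by ring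

lemma weight_succ_mul_weight_succ_le (h : 2 * r ≤ N + i + j + 1) :
    weight N r (i + 1) * weight N r (j + 1) ≤ weight N r i * weight N r j := by
  rcases le_or_gt r i with hi | hi
  · simp [weight_of_lt (Nat.lt_succ_of_le hi)]
  rcases le_or_gt r j with hj | hj
  · simp [weight_of_lt (Nat.lt_succ_of_le hj)]
  simp only [weight, if_pos hi.le, if_pos hj.le, if_pos (Nat.succ_le_of_lt hi),
    if_pos (Nat.succ_le_of_lt hj)]
  convert choose_mul_choose_le_choose_succ_mul_choose_succ
    (show (r - (i + 1)) + (r - (j + 1)) + 1 ≤ N by omega) using 3 <;> omega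

lemma mul_weight_succ_add_mul_weight_succ_le_max (h : 2 * r ≤ N + i + j + 1) (a b : ℕ) :
    a * weight N r (i + 1) + b * weight N r (j + 1) ≤
      max (a * weight (N + 1) r i) (b * weight (N + 1) r j) := by
  by_contra! hlt
  obtain ⟨hi, hj⟩ := max_lt_iff.1 hlt
  rw [weight_succ_left, mul_add] at hi hj
  have hi' : a * weight N r i < b * weight N r (j + 1) := by omega
  have hj' : b * weight N r j < a * weight N r (i + 1) := by omega
  refine (Nat.mul_lt_mul'' hi' hj').not_ge ?_
  calc b * weight N r (j + 1) * (a * weight N r (i + 1))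
      = a * b * (weight N r (i + 1) * weight N r (j + 1)) := by ring
    _ ≤ a * b * (weight N r i * weight N r j) :=
        Nat.mul_le_mul_left _ (weight_succ_mul_weight_succ_le h)
    _ = a * weight N r i * (b * weight N r j) := by ring

/-- With `m = k + 1 + 2 * q`, the difference of the two sides is at least
`q * (d + 1) * (k - 1)`. -/
lemma sub_mul_le_sub_mul_add_one {m d k : ℕ} (hk : 1 ≤ k) (hkm : k ≤ m)
    (hn : (k + 1) * (d + 1) ≤ m + N + 1) (hi : 2 * i + 1 = m + k) :
    (k + d - i) * m ≤ (m - i) * (N + 1) := by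
  obtain ⟨q, rfl⟩ : ∃ q, i = k + q := Nat.exists_eq_add_of_le (by omega)
  obtain rfl : m = k + 1 + 2 * q := by omega
  rw [Nat.add_sub_add_left, show k + 1 + 2 * q - (k + q) = q + 1 by omega]
  rcases le_total d q with hdq | hqd
  · simp [Nat.sub_eq_zero_of_le hdq]
  · obtain ⟨c, rfl⟩ := Nat.exists_eq_add_of_le hqd
    obtain ⟨l, rfl⟩ := Nat.exists_eq_add_of_le' hk
    rw [Nat.add_sub_cancel_left]
    nlinarith [Nat.mul_le_mul_left (q + 1) hn, Nat.zero_le (q * (q + c + 1) * l)]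

lemma mul_weight_succ_le_of_mul_sub_le {m d k a b : ℕ} (hk : 1 ≤ k) (hkm : k ≤ m)
    (hn : (k + 1) * (d + 1) ≤ m + N + 1) (hi : 2 * i + 1 = m + k) (hab : a * (m - i) ≤ b * m) :
    a * weight N (k + d) (i + 1) ≤ b * weight (N + 1) (k + d) i := by
  have hm : 0 < m := hk.trans hkm
  refine Nat.le_of_mul_le_mul_right (c := m * (N + 1)) ?_ (by positivity)
  calc a * weight N (k + d) (i + 1) * (m * (N + 1))
      = a * m * ((N + 1) * weight N (k + d) (i + 1)) := by ring
    _ = a * weight (N + 1) (k + d) i * ((k + d - i) * m) := by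
        rw [add_one_mul_weight_succ]; ring
    _ ≤ a * weight (N + 1) (k + d) i * ((m - i) * (N + 1)) := by
        gcongr a * weight (N + 1) (k + d) i * ?_
        exact sub_mul_le_sub_mul_add_one hk hkm hn hi
    _ = a * (m - i) * (weight (N + 1) (k + d) i * (N + 1)) := by ring
    _ ≤ b * m * (weight (N + 1) (k + d) i * (N + 1)) := by gcongr
    _ = b * weight (N + 1) (k + d) i * (m * (N + 1)) := by ring

end Weight

lemma exists_subset_sum_le_of_involution {ι : Type*} [LinearOrder ι] {I : Finset ι} {σ : ι → ι}
    (hσ : ∀ i ∈ I, σ i ∈ I) (hσσ : ∀ i ∈ I, σ (σ i) = i) {x y : ι → ℕ}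
    (hfix : ∀ i ∈ I, σ i = i → x i ≤ y i)
    (hpair : ∀ i ∈ I, σ i ≠ i → x i + x (σ i) ≤ max (y i) (y (σ i))) :
    ∃ S ⊆ I, (∀ i ∈ S, σ i ∈ S → σ i = i) ∧ ∑ i ∈ I, x i ≤ ∑ i ∈ S, y i := by
  let better (i : ι) : Prop := y (σ i) < y i ∨ y (σ i) = y i ∧ i ≤ σ i
  classical
  refine ⟨{i ∈ I | better i}, filter_subset _ _, fun i hi hi' => ?_, ?_⟩
  · simp only [mem_filter, better] at hi hi'
    rw [hσσ i hi.1] at hi'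
    grind
  · let g (i : ι) : ℕ := if better i then y i else 0
    have hg : ∀ i ∈ I, x i + x (σ i) ≤ g i + g (σ i) := by
      intro i hi
      rcases eq_or_ne (σ i) i with hfixed | hmoved
      · simpa [g, better, hfixed] using add_le_add (hfix i hi hfixed) (hfix i hi hfixed)
      · have := hpair i hi hmoved
        simp only [g, better, hσσ i hi]
        split_ifs <;> grind
    have sum_comp_σ (f : ι → ℕ) : ∑ i ∈ I, f (σ i) = ∑ i ∈ I, f i :=
      sum_nbij' σ σ hσ hσ hσσ hσσ fun _ _ => rfl
    have := sum_le_sum hg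
    rw [sum_add_distrib, sum_add_distrib, sum_comp_σ, sum_comp_σ] at this
    rw [sum_filter]
    change ∑ i ∈ I, x i ≤ ∑ i ∈ I, g i
    omega

variable {α : Type*} [DecidableEq α]

/-- A family of finite sets is `k`-intersecting if every two of its members, possibly equal, have at
least `k` elements in common; in particular all members have at least `k` elements. -/
def IsKIntersecting (k : ℕ) (𝒜 : Finset (Finset α)) : Prop :=
  ∀ A ∈ 𝒜, ∀ B ∈ 𝒜, k ≤ #(A ∩ B)

variable {𝒜 : Finset (Finset α)} {s A B : Finset α} {a b : α} {k : ℕ}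

namespace IsKIntersecting

lemma le_card (h : IsKIntersecting k 𝒜) (hA : A ∈ 𝒜) : k ≤ #A := by
  simpa only [inter_self] using h A hA A hA

lemma insert_of_subset (h : IsKIntersecting k 𝒜) (hA : A ∈ 𝒜) (hAB : A ⊆ B) :
    IsKIntersecting k (insert B 𝒜) := by
  have exists_subset : ∀ X ∈ insert B 𝒜, ∃ Y ∈ 𝒜, Y ⊆ X :=
    forall_mem_insert .. |>.2 ⟨⟨A, hA, hAB⟩, fun X hX => ⟨X, hX, Subset.rfl⟩⟩
  intro X hX Y hY
  obtain ⟨X', hX', hXX'⟩ := exists_subset X hX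
  obtain ⟨Y', hY', hYY'⟩ := exists_subset Y hY
  exact (h X' hX' Y' hY').trans (card_le_card (inter_subset_inter hXX' hYY'))

end IsKIntersecting

section Compression

lemma compress_singleton_of_mem_of_notMem (ha : a ∈ A) (hb : b ∉ A) :
    UV.compress {b} {a} A = insert b (A.erase a) := by
  rw [UV.compress_of_disjoint_of_le (disjoint_singleton_left.2 hb) (singleton_subset_iff.2 ha)]
  grind

lemma insert_erase_mem_of_isCompressed (h : UV.IsCompressed {b} {a} 𝒜) (hA : A ∈ 𝒜) (ha : a ∈ A)
    (hb : b ∉ A) : insert b (A.erase a) ∈ 𝒜 := by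
  rw [← compress_singleton_of_mem_of_notMem ha hb, ← h.eq]
  exact UV.compress_mem_compression hA

lemma sum_compression {u v : Finset α} (huv : #u = #v) (c : ℕ → ℕ) (𝒜 : Finset (Finset α)) :
    ∑ A ∈ 𝓒 u v 𝒜, c #A = ∑ A ∈ 𝒜, c #A := by
  rw [UV.compression, sum_union UV.compress_disjoint, filter_image, sum_image UV.compress_injOn]
  simp only [UV.card_compress huv]
  exact sum_filter_add_sum_filter_not 𝒜 (UV.compress u v · ∈ 𝒜) _

lemma insert_erase_mem_of_mem_compression (hA : A ∈ 𝓒 {b} {a} 𝒜) (ha : a ∈ A) (hb : b ∉ A) :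
    insert b (A.erase a) ∈ 𝒜 := by
  have := UV.sup_sdiff_mem_of_mem_compression hA (singleton_subset_iff.2 ha)
    (disjoint_singleton_left.2 hb)
  rwa [← UV.compress_of_disjoint_of_le (disjoint_singleton_left.2 hb) (singleton_subset_iff.2 ha),
    compress_singleton_of_mem_of_notMem ha hb] at this

lemma exists_eq_insert_erase_of_mem_compression_of_notMem (hA : A ∈ 𝓒 {b} {a} 𝒜)
    (hA' : A ∉ 𝒜) : ∃ B ∈ 𝒜, a ∈ B ∧ b ∉ B ∧ A = insert b (B.erase a) := by
  obtain ⟨hmem, -⟩ | ⟨-, B, hB, rfl⟩ := UV.mem_compression.1 hA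
  · exact absurd hmem hA'
  · by_cases hab : a ∈ B ∧ b ∉ B
    · exact ⟨B, hB, hab.1, hab.2, compress_singleton_of_mem_of_notMem hab.1 hab.2⟩
    · rw [UV.compress, if_neg (by simpa [and_comm] using hab)] at hA'
      exact absurd hB hA'

lemma card_inter_le_card_insert_erase_inter (hb : b ∉ A) (hB : a ∈ B → b ∈ B) :
    #(A ∩ B) ≤ #(insert b (A.erase a) ∩ B) := by
  refine card_le_card_of_injOn (Equiv.swap a b) (fun x hx => ?_) (Equiv.swap a b).injective.injOn
  grind

lemma IsKIntersecting.compression (h : IsKIntersecting k 𝒜) (a b : α) :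
    IsKIntersecting k (𝓒 {b} {a} 𝒜) := by
  have moved_inter_kept : ∀ A ∈ 𝒜, b ∉ A → ∀ B ∈ 𝓒 {b} {a} 𝒜, B ∈ 𝒜 →
      k ≤ #(insert b (A.erase a) ∩ B) := by
    intro A hA hbA B hB hB𝒜
    by_cases hab : a ∈ B ∧ b ∉ B
    · have hB' := insert_erase_mem_of_mem_compression hB hab.1 hab.2
      exact (h A hA _ hB').trans (card_le_card (by grind))
    · exact (h A hA B hB𝒜).trans
        (card_inter_le_card_insert_erase_inter hbA (by simpa using hab))
  intro X hX Y hY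
  by_cases hX𝒜 : X ∈ 𝒜 <;> by_cases hY𝒜 : Y ∈ 𝒜
  · exact h X hX𝒜 Y hY𝒜
  · obtain ⟨B, hB, -, hbB, rfl⟩ := exists_eq_insert_erase_of_mem_compression_of_notMem hY hY𝒜
    rw [inter_comm]
    exact moved_inter_kept B hB hbB X hX hX𝒜
  · obtain ⟨A, hA, -, hbA, rfl⟩ := exists_eq_insert_erase_of_mem_compression_of_notMem hX hX𝒜
    exact moved_inter_kept A hA hbA Y hY hY𝒜
  · obtain ⟨A, hA, haA, hbA, rfl⟩ := exists_eq_insert_erase_of_mem_compression_of_notMem hX hX𝒜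
    obtain ⟨B, hB, haB, -, rfl⟩ := exists_eq_insert_erase_of_mem_compression_of_notMem hY hY𝒜
    have : #(A ∩ B) ≤ #(insert b ((A ∩ B).erase a)) := by grind
    exact (h A hA B hB).trans (this.trans (card_le_card (by grind)))

lemma compression_subset_powerset (hb : b ∈ s) (h𝒜 : 𝒜 ⊆ s.powerset) :
    𝓒 {b} {a} 𝒜 ⊆ s.powerset := by
  intro X hX
  by_cases hX𝒜 : X ∈ 𝒜
  · exact h𝒜 hX𝒜
  · obtain ⟨B, hB, -, -, rfl⟩ := exists_eq_insert_erase_of_mem_compression_of_notMem hX hX𝒜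
    exact mem_powerset.2
      (insert_subset hb ((erase_subset _ _).trans (mem_powerset.1 (h𝒜 hB))))

lemma nonMemberSubfamily_ssubset_of_not_isCompressed (h : ¬ UV.IsCompressed {b} {a} 𝒜) :
    𝒜.nonMemberSubfamily a ⊂ (𝓒 {b} {a} 𝒜).nonMemberSubfamily a := by
  obtain ⟨X, hX, hX𝒜⟩ : ∃ X ∈ 𝓒 {b} {a} 𝒜, X ∉ 𝒜 := by
    by_contra! hsub
    exact h (eq_of_subset_of_card_le hsub (UV.card_compression _ _ 𝒜).ge)
  refine ssubset_iff_of_subset (fun A hA => ?_) |>.2 ⟨X, ?_, fun hX' => ?_⟩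
  · obtain ⟨hA, haA⟩ := mem_nonMemberSubfamily.1 hA
    have := UV.compress_mem_compression (u := {b}) (v := {a}) hA
    rw [UV.compress, if_neg (by simp [haA])] at this
    exact mem_nonMemberSubfamily.2 ⟨this, haA⟩
  · obtain ⟨B, -, haB, hbB, rfl⟩ := exists_eq_insert_erase_of_mem_compression_of_notMem hX hX𝒜
    exact mem_nonMemberSubfamily.2 ⟨hX, by grind⟩
  · exact hX𝒜 (mem_nonMemberSubfamily.1 hX').1

/-- Take `ℬ` maximising `#ℬ + #(ℬ.nonMemberSubfamily a)`: both adding a set `insert a A` and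
compressing would increase this sum. -/
lemma IsKIntersecting.exists_isCompressed (h : IsKIntersecting k 𝒜)
    (h𝒜 : 𝒜 ⊆ (insert a s).powerset) (c : ℕ → ℕ) :
    ∃ ℬ ⊆ (insert a s).powerset, IsKIntersecting k ℬ ∧ (∑ A ∈ 𝒜, c #A ≤ ∑ A ∈ ℬ, c #A) ∧
      (∀ A ∈ ℬ, insert a A ∈ ℬ) ∧ ∀ b ∈ s, UV.IsCompressed {b} {a} ℬ := by
  classical
  obtain ⟨ℬ, hℬ, hmax⟩ := exists_max_image
    {ℬ ∈ (insert a s).powerset.powerset |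
      IsKIntersecting k ℬ ∧ ∑ A ∈ 𝒜, c #A ≤ ∑ A ∈ ℬ, c #A}
    (fun ℬ => #ℬ + #(ℬ.nonMemberSubfamily a))
    ⟨𝒜, mem_filter.2 ⟨mem_powerset.2 h𝒜, h, le_rfl⟩⟩
  simp only [mem_filter, mem_powerset, and_imp] at hℬ hmax
  obtain ⟨hsub, hint, hsum⟩ := hℬ
  refine ⟨ℬ, hsub, hint, hsum, fun A hA => ?_, fun b hb => ?_⟩
  · by_contra hnew
    have hmono : #(ℬ.nonMemberSubfamily a) ≤ #((insert (insert a A) ℬ).nonMemberSubfamily a) :=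
      card_le_card (filter_subset_filter _ (subset_insert _ _))
    have := hmax (insert (insert a A) ℬ)
      (insert_subset (mem_powerset.2
        (insert_subset (mem_insert_self a s) (mem_powerset.1 (hsub hA)))) hsub)
      (hint.insert_of_subset hA (subset_insert a A))
      (hsum.trans (sum_le_sum_of_subset (subset_insert _ _)))
    rw [card_insert_of_notMem hnew] at this
    omega
  · by_contra hnot
    have hlt := card_lt_card (nonMemberSubfamily_ssubset_of_not_isCompressed hnot)
    have := hmax (𝓒 {b} {a} ℬ) (compression_subset_powerset (mem_insert_of_mem hb) hsub)
      (hint.compression a b) (by rwa [sum_compression (by simp)])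
    rw [UV.card_compression] at this
    omega

end Compression

section Slices

lemma exists_card_mul_sub_le_card_filter_notMem_mul (hs : s.Nonempty) (h𝒜 : 𝒜 ⊆ s.powerset)
    {i : ℕ} (hi : (𝒜 : Set (Finset α)).Sized i) :
    ∃ m ∈ s, #𝒜 * (#s - i) ≤ #{A ∈ 𝒜 | m ∉ A} * #s := by
  have double_count : ∑ m ∈ s, #{A ∈ 𝒜 | m ∉ A} = #𝒜 * (#s - i) := by
    calc ∑ m ∈ s, #{A ∈ 𝒜 | m ∉ A}
        = ∑ A ∈ 𝒜, #{m ∈ s | m ∉ A} := sum_card_bipartiteAbove_eq_sum_card_bipartiteBelow _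
      _ = ∑ _ ∈ 𝒜, (#s - i) := sum_congr rfl fun A hA => by
          rw [filter_notMem_eq_sdiff, card_sdiff_of_subset (mem_powerset.1 (h𝒜 hA)), hi hA]
      _ = #𝒜 * (#s - i) := sum_const_nat fun _ _ => rfl
  refine exists_le_of_sum_le hs (le_of_eq ?_)
  calc ∑ _ ∈ s, #𝒜 * (#s - i)
      = #𝒜 * (#s - i) * #s := by rw [sum_const, smul_eq_mul, mul_comm]
    _ = ∑ m ∈ s, #{A ∈ 𝒜 | m ∉ A} * #s := by rw [← sum_mul, double_count]

variable {𝒟 : Finset (Finset α)} {N d : ℕ}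

lemma exists_subset_isKIntersecting_slice (hk : 1 ≤ k) (hks : k ≤ #s)
    (hn : (k + 1) * (d + 1) ≤ #s + N + 1) (h𝒟 : 𝒟 ⊆ s.powerset)
    (hunion : ∀ A ∈ 𝒟, ∀ B ∈ 𝒟, #(A ∩ B) < k → A ∪ B = s) {i : ℕ} (hi : 2 * i + 1 = #s + k) :
    ∃ 𝒯 ⊆ 𝒟 # i, IsKIntersecting k 𝒯 ∧
      #(𝒟 # i) * weight N (k + d) (i + 1) ≤ #𝒯 * weight (N + 1) (k + d) i := by
  obtain ⟨m, hm, hcard⟩ := exists_card_mul_sub_le_card_filter_notMem_mul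
    (card_pos.1 (hk.trans hks)) (slice_subset.trans h𝒟) (sized_slice (𝒜 := 𝒟) (r := i))
  refine ⟨{A ∈ 𝒟 # i | m ∉ A}, filter_subset _ _, fun A hA B hB => ?_,
    mul_weight_succ_le_of_mul_sub_le hk hks hn hi hcard⟩
  by_contra! hlt
  simp only [mem_filter, mem_slice] at hA hB
  rw [← hunion A hA.1.1 B hB.1.1 hlt] at hm
  exact (mem_union.1 hm).elim hA.2 hB.2

lemma exists_slice_selection (hk : 1 ≤ k) (hks : k ≤ #s)
    (hn : (k + 1) * (d + 1) ≤ #s + N + 1) (h𝒟 : 𝒟 ⊆ s.powerset)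
    (hunion : ∀ A ∈ 𝒟, ∀ B ∈ 𝒟, #(A ∩ B) < k → A ∪ B = s) :
    ∃ T : ℕ → Finset (Finset α), (∀ i, T i ⊆ 𝒟 # i) ∧
      (∀ i, 2 * i + 1 = #s + k → IsKIntersecting k (T i)) ∧
      ∃ S : Finset ℕ, (∀ i ∈ S, ∀ j ∈ S, i + j + 1 = #s + k → i = j) ∧
        ∑ i ∈ range (#s + k), #(𝒟 # i) * weight N (k + d) (i + 1) ≤
          ∑ i ∈ S, #(T i) * weight (N + 1) (k + d) i := by
  have exists_T (i : ℕ) : ∃ 𝒯 ⊆ 𝒟 # i, (2 * i + 1 = #s + k → IsKIntersecting k 𝒯 ∧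
      #(𝒟 # i) * weight N (k + d) (i + 1) ≤ #𝒯 * weight (N + 1) (k + d) i) ∧
      (2 * i + 1 ≠ #s + k → 𝒯 = 𝒟 # i) := by
    by_cases hi : 2 * i + 1 = #s + k
    · obtain ⟨𝒯, h𝒯, h⟩ := exists_subset_isKIntersecting_slice hk hks hn h𝒟 hunion hi
      exact ⟨𝒯, h𝒯, fun _ => h, fun hne => absurd hi hne⟩
    · exact ⟨𝒟 # i, Subset.rfl, fun h => absurd h hi, fun _ => rfl⟩
  choose T hT hTself hTpair using exists_T
  obtain ⟨S, -, hσ, hle⟩ := exists_subset_sum_le_of_involution (I := range (#s + k))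
    (σ := fun i => #s + k - 1 - i) (x := fun i => #(𝒟 # i) * weight N (k + d) (i + 1))
    (y := fun i => #(T i) * weight (N + 1) (k + d) i) (by simp; omega) (by simp; omega)
    (fun i hi hfix => (hTself i (by grind)).2)
    (fun i hi hne => by
      rw [mem_range] at hi
      rw [hTpair i (by omega), hTpair (#s + k - 1 - i) (by omega)]
      refine mul_weight_succ_add_mul_weight_succ_le_max ?_ _ _
      have : i + (#s + k - 1 - i) + 1 = #s + k := by omega
      nlinarith [Nat.mul_le_mul_right d hk])
  refine ⟨T, hT, fun i hi => (hTself i hi).1, S, fun i hi j hj hij => ?_, hle⟩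
  obtain rfl : j = #s + k - 1 - i := by omega
  exact (hσ i hi hj).symm

lemma exists_subset_isKIntersecting_sum_weight_le (hk : 1 ≤ k) (hks : k ≤ #s)
    (hn : (k + 1) * (d + 1) ≤ #s + N + 1) (h𝒟 : 𝒟 ⊆ s.powerset)
    (hint : IsKIntersecting (k - 1) 𝒟)
    (hunion : ∀ A ∈ 𝒟, ∀ B ∈ 𝒟, #(A ∩ B) < k → A ∪ B = s) :
    ∃ 𝒯 ⊆ 𝒟, IsKIntersecting k 𝒯 ∧
      ∑ A ∈ 𝒟, weight N (k + d) (#A + 1) ≤ ∑ A ∈ 𝒯, weight (N + 1) (k + d) #A := by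
  obtain ⟨T, hT, hTself, S, hpair, hle⟩ := exists_slice_selection hk hks hn h𝒟 hunion
  have card_of_mem {i : ℕ} {A : Finset α} (hA : A ∈ T i) : #A = i := (mem_slice.1 (hT i hA)).2
  have hsub : S.biUnion T ⊆ 𝒟 := biUnion_subset.2 fun i _ => (hT i).trans slice_subset
  refine ⟨S.biUnion T, hsub, fun A hA B hB => ?_, ?_⟩
  · by_contra! hlt
    have h_union := hunion A (hsub hA) B (hsub hB) hlt
    have h_inter := hint A (hsub hA) B (hsub hB)
    have h_card := card_union_add_card_inter A B
    rw [h_union] at h_card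
    obtain ⟨i, hi, hAi⟩ := mem_biUnion.1 hA
    obtain ⟨j, hj, hBj⟩ := mem_biUnion.1 hB
    have hij : i + j + 1 = #s + k := by
      rw [← card_of_mem hAi, ← card_of_mem hBj]
      omega
    obtain rfl := hpair i hi j hj hij
    exact hlt.not_ge (hTself i (by omega) A hAi B hBj)
  · calc ∑ A ∈ 𝒟, weight N (k + d) (#A + 1)
        = ∑ i ∈ range (#s + k), ∑ A ∈ 𝒟 # i, weight N (k + d) (#A + 1) :=
          (sum_fiberwise_of_maps_to (fun A hA => mem_range.2 (by
            have := card_le_card (mem_powerset.1 (h𝒟 hA))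
            omega)) _).symm
      _ = ∑ i ∈ range (#s + k), #(𝒟 # i) * weight N (k + d) (i + 1) :=
          sum_congr rfl fun i _ => sum_const_nat fun A hA => by rw [(mem_slice.1 hA).2]
      _ ≤ ∑ i ∈ S, #(T i) * weight (N + 1) (k + d) i := hle
      _ = ∑ i ∈ S, ∑ A ∈ T i, weight (N + 1) (k + d) #A :=
          sum_congr rfl fun i _ => (sum_const_nat fun A hA => by rw [card_of_mem hA]).symm
      _ = ∑ A ∈ S.biUnion T, weight (N + 1) (k + d) #A :=
          (sum_biUnion fun i _ j _ hij =>
            (pairwiseDisjoint_slice (Set.mem_univ i) (Set.mem_univ j) hij).mono (hT i) (hT j)).symm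

end Slices

section Peeling

lemma memberSubfamily_subset_powerset (h𝒜 : 𝒜 ⊆ (insert a s).powerset) :
    𝒜.memberSubfamily a ⊆ s.powerset := by
  intro A hA
  rw [mem_memberSubfamily] at hA
  exact mem_powerset.2 ((insert_subset_insert_iff hA.2).1 (mem_powerset.1 (h𝒜 hA.1)))

lemma nonMemberSubfamily_subset_memberSubfamily (hup : ∀ A ∈ 𝒜, insert a A ∈ 𝒜) :
    𝒜.nonMemberSubfamily a ⊆ 𝒜.memberSubfamily a := by
  intro A hA
  rw [mem_nonMemberSubfamily] at hA
  exact mem_memberSubfamily.2 ⟨hup A hA.1, hA.2⟩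

lemma sum_weight_eq_sum_nonMemberSubfamily_add (N r : ℕ) (hup : ∀ A ∈ 𝒜, insert a A ∈ 𝒜) :
    ∑ A ∈ 𝒜, weight N r #A = ∑ A ∈ 𝒜.nonMemberSubfamily a, weight (N + 1) r #A +
      ∑ A ∈ 𝒜.memberSubfamily a \ 𝒜.nonMemberSubfamily a, weight N r (#A + 1) := by
  have sum_mem : ∑ A ∈ 𝒜 with a ∈ A, weight N r #A =
      ∑ A ∈ 𝒜.memberSubfamily a, weight N r (#A + 1) := by
    rw [← image_insert_memberSubfamily, sum_image fun A hA B hB hAB => by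
      rw [← erase_insert (mem_memberSubfamily.1 hA).2, hAB,
        erase_insert (mem_memberSubfamily.1 hB).2]]
    exact sum_congr rfl fun A hA => by rw [card_insert_of_notMem (mem_memberSubfamily.1 hA).2]
  calc ∑ A ∈ 𝒜, weight N r #A
      = ∑ A ∈ 𝒜.memberSubfamily a, weight N r (#A + 1) +
          ∑ A ∈ 𝒜.nonMemberSubfamily a, weight N r #A := by
        rw [← sum_mem, nonMemberSubfamily, sum_filter_add_sum_filter_not]
    _ = _ := by
        simp only [← sum_sdiff (nonMemberSubfamily_subset_memberSubfamily hup),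
          weight_succ_left, sum_add_distrib]
        omega

lemma IsKIntersecting.memberSubfamily (h : IsKIntersecting k 𝒜) (a : α) :
    IsKIntersecting (k - 1) (𝒜.memberSubfamily a) := by
  intro A hA B hB
  rw [mem_memberSubfamily] at hA hB
  have := h _ hA.1 _ hB.1
  rw [← insert_inter_distrib, card_insert_of_notMem (by grind)] at this
  omega

lemma IsKIntersecting.union_eq_of_isCompressed (h : IsKIntersecting k 𝒜)
    (h𝒜 : 𝒜 ⊆ (insert a s).powerset) (ha : a ∉ s) (hcomp : ∀ b ∈ s, UV.IsCompressed {b} {a} 𝒜)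
    (hA : A ∈ 𝒜.memberSubfamily a) (hB : B ∈ 𝒜.memberSubfamily a) (hAB : #(A ∩ B) < k) :
    A ∪ B = s := by
  have hAs : A ⊆ s := mem_powerset.1 (memberSubfamily_subset_powerset h𝒜 hA)
  have hBs : B ⊆ s := mem_powerset.1 (memberSubfamily_subset_powerset h𝒜 hB)
  rw [mem_memberSubfamily] at hA hB
  refine Subset.antisymm (union_subset hAs hBs) fun m hm => ?_
  by_contra hmAB
  have hmem : insert m A ∈ 𝒜 := by
    have := insert_erase_mem_of_isCompressed (hcomp m hm) hA.1 (mem_insert_self a A) (by grind)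
    rwa [erase_insert hA.2] at this
  have inter_eq : insert m A ∩ insert a B = A ∩ B := by grind
  exact hAB.not_ge (inter_eq ▸ h _ hmem _ hB.1)

lemma IsKIntersecting.nonMemberSubfamily_union (h : IsKIntersecting k 𝒜)
    {𝒯 : Finset (Finset α)} (h𝒯 : 𝒯 ⊆ 𝒜.memberSubfamily a) (hint : IsKIntersecting k 𝒯) :
    IsKIntersecting k (𝒜.nonMemberSubfamily a ∪ 𝒯) := by
  have cross : ∀ A ∈ 𝒜.nonMemberSubfamily a, ∀ B ∈ 𝒯, k ≤ #(A ∩ B) := by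
    intro A hA B hB
    rw [mem_nonMemberSubfamily] at hA
    rw [← inter_insert_of_notMem hA.2]
    exact h A hA.1 _ (mem_memberSubfamily.1 (h𝒯 hB)).1
  intro A hA B hB
  rcases mem_union.1 hA with hA | hA <;> rcases mem_union.1 hB with hB | hB
  · exact h A (mem_nonMemberSubfamily.1 hA).1 B (mem_nonMemberSubfamily.1 hB).1
  · exact cross A hA B hB
  · exact inter_comm B A ▸ cross B hB A hA
  · exact hint A hA B hB

lemma IsKIntersecting.exists_subset_powerset_sum_weight_le (h : IsKIntersecting k 𝒜) {N d : ℕ}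
    (hk : 1 ≤ k) (hks : k ≤ #s) (hn : (k + 1) * (d + 1) ≤ #s + N + 1) (ha : a ∉ s)
    (h𝒜 : 𝒜 ⊆ (insert a s).powerset) :
    ∃ ℬ ⊆ s.powerset, IsKIntersecting k ℬ ∧
      ∑ A ∈ 𝒜, weight N (k + d) #A ≤ ∑ A ∈ ℬ, weight (N + 1) (k + d) #A := by
  obtain ⟨𝒞, h𝒞, hint, hle, hup, hcomp⟩ := h.exists_isCompressed h𝒜 (weight N (k + d))
  have member_subset := memberSubfamily_subset_powerset h𝒞
  obtain ⟨𝒯, h𝒯, h𝒯int, h𝒯sum⟩ := exists_subset_isKIntersecting_sum_weight_le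
    (𝒟 := 𝒞.memberSubfamily a \ 𝒞.nonMemberSubfamily a) hk hks hn
    (sdiff_subset.trans member_subset)
    (fun A hA B hB => hint.memberSubfamily a A (sdiff_subset hA) B (sdiff_subset hB))
    (fun A hA B hB => hint.union_eq_of_isCompressed h𝒞 ha hcomp (sdiff_subset hA)
      (sdiff_subset hB))
  refine ⟨𝒞.nonMemberSubfamily a ∪ 𝒯,
    union_subset ((nonMemberSubfamily_subset_memberSubfamily hup).trans member_subset)
      (h𝒯.trans (sdiff_subset.trans member_subset)),
    hint.nonMemberSubfamily_union (h𝒯.trans sdiff_subset) h𝒯int, hle.trans ?_⟩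
  rw [sum_weight_eq_sum_nonMemberSubfamily_add N (k + d) hup,
    sum_union (disjoint_sdiff.mono_right h𝒯)]
  gcongr

lemma IsKIntersecting.sum_weight_le_of_card_le (h : IsKIntersecting k 𝒜) (h𝒜 : 𝒜 ⊆ s.powerset)
    (hs : #s ≤ k) (N d : ℕ) :
    ∑ A ∈ 𝒜, weight N (k + d) #A ≤ (#s + N - k).choose d := by
  have eq_s : ∀ A ∈ 𝒜, A = s := fun A hA =>
    eq_of_subset_of_card_le (mem_powerset.1 (h𝒜 hA)) (hs.trans (h.le_card hA))
  obtain rfl | rfl := subset_singleton_iff.1 fun A hA => mem_singleton.2 (eq_s A hA)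
  · simp
  · obtain rfl : #s = k := hs.antisymm (h.le_card (mem_singleton_self s))
    rw [sum_singleton, Nat.add_sub_cancel_left, weight_add_left]

end Peeling

theorem IsKIntersecting.sum_weight_le (h : IsKIntersecting k 𝒜) (h𝒜 : 𝒜 ⊆ s.powerset)
    {N d : ℕ} (hk : 1 ≤ k) (hn : (k + 1) * (d + 1) ≤ #s + N) :
    ∑ A ∈ 𝒜, weight N (k + d) #A ≤ (#s + N - k).choose d := by
  induction s using Finset.induction_on generalizing N 𝒜 with
  | empty => exact h.sum_weight_le_of_card_le h𝒜 (Nat.zero_le k) N d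
  | insert a s ha ih =>
    obtain hs | hs := le_or_gt #(insert a s) k
    · exact h.sum_weight_le_of_card_le h𝒜 hs N d
    · rw [card_insert_of_notMem ha] at hs hn ⊢
      have hks : k ≤ #s := Nat.le_of_lt_succ hs
      obtain ⟨ℬ, hℬ, hint, hle⟩ :=
        h.exists_subset_powerset_sum_weight_le (N := N) (d := d) hk hks (by omega) ha h𝒜
      rw [Nat.add_right_comm]
      exact hle.trans (ih hint hℬ (by omega))

end ErdosKoRado

open ErdosKoRado

theorem stmt_6_general {α : Type*} [Fintype α] [DecidableEq α] {r k : ℕ}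
    (hn : (k + 1) * (r - k + 1) ≤ Fintype.card α) {𝒜 : Finset (Finset α)}
    (hunif : (𝒜 : Set (Finset α)).Sized r) (hint : IsKIntersecting k 𝒜) :
    #𝒜 ≤ (Fintype.card α - k).choose (r - k) := by
  obtain rfl | ⟨A, hA⟩ := 𝒜.eq_empty_or_nonempty
  · exact Nat.zero_le _
  obtain ⟨d, rfl⟩ := Nat.exists_eq_add_of_le (hunif hA ▸ hint.le_card hA)
  obtain rfl | hk := k.eq_zero_or_pos
  · simpa using hunif.card_le
  rw [Nat.add_sub_cancel_left] at hn ⊢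
  calc #𝒜 = ∑ A ∈ 𝒜, weight 0 (k + d) #A := by
        rw [card_eq_sum_ones]
        exact sum_congr rfl fun A hA => by simp [hunif hA, weight]
    _ ≤ (#univ + 0 - k).choose d := hint.sum_weight_le (by simp) hk hn
    _ = (Fintype.card α - k).choose d := by rw [add_zero, card_univ]

/-- For `1 ≤ k < r` and `n ≥ (k+1)(r-k+1)`, every `r`-uniform
`k`-intersecting hypergraph on `n` vertices has at most `C(n-k, r-k)` edges. -/
theorem stmt_6 (n r k : ℕ) (hk : 1 ≤ k) (hkr : k < r) (hn : (k + 1) * (r - k + 1) ≤ n)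
    (E : Finset (Finset (Fin n)))
    (hunif : ∀ e ∈ E, e.card = r)
    (hint : ∀ e₁ ∈ E, ∀ e₂ ∈ E, k ≤ (e₁ ∩ e₂).card) :
    E.card ≤ (n - k).choose (r - k) := by
  simpa only [Fintype.card_fin] using
    stmt_6_general (by rwa [Fintype.card_fin]) (fun e he => hunif e he) hint
end
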